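/- arXiv:2308.04357 — 7 statements merged into one kernel-verified Lean document; each statement's English description precedes it below -/
import Mathlib

section
/- For all integers s ≥ 3, t ≥ 1 and n ≥ 1, it holds that f(n; s, t) ≤ f(n; s−1, t+1)^{s+t} · n^{s−1}. -/
/-- A triple `x < y < z` is non-increasing (w.r.t. a pair-coloring `χ`, queried as
`χ x y` for `x < y`) if `χ(x,y) ≥ χ(y,z)` and moreover `χ(x,z) = χ(x,y)` or
`χ(x,z) = χ(y,z)`. -/
def NonIncTriple {N n : ℕ} (χ : Fin N → Fin N → Fin n) (x y z : Fin N) : Prop :=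
  χ y z ≤ χ x y ∧ (χ x z = χ x y ∨ χ x z = χ y z)

/-- Every coloring of the pairs of `{1, …, N}` by `n` colors admits a copy of `H_{s,t}`:
vertices `x_1 < … < x_s = y_1 < … < y_t` (encoded as a single strictly monotone
`u : Fin (s+t-1) → Fin N`, with `x_{i+1} = u i` and `y_{j+1} = u (s-1+j)`) such that
`{x_1, …, x_s}` is non-increasing and `χ(x_{s−1},x_s) ≥ χ(y_1,y_2) ≥ … ≥ χ(y_{t−1},y_t)`
(i.e. the colors of consecutive edges `(u i, u (i+1))` for `i ≥ s − 2` are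
non-increasing). -/
def HasHstCopy (n N s t : ℕ) : Prop :=
  ∀ χ : Fin N → Fin N → Fin n,
    ∃ u : Fin (s + t - 1) → Fin N, StrictMono u ∧
      (∀ i j k : Fin (s + t - 1), i < j → j < k → (k : ℕ) < s →
        NonIncTriple χ (u i) (u j) (u k)) ∧
      (∀ (i : ℕ) (_h1 : s - 2 ≤ i) (h2 : i + 2 ≤ s + t - 2),
        χ (u ⟨i + 1, by omega⟩) (u ⟨i + 2, by omega⟩) ≤
          χ (u ⟨i, by omega⟩) (u ⟨i + 1, by omega⟩))

/-- `f(n; s, t)`: the minimum `N` such that every coloring of the pairs of `{1, …, N}`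
by `n` colors admits a copy of `H_{s,t}`. -/
noncomputable def fFun (n s t : ℕ) : ℕ := sInf {N | HasHstCopy n N s t}

open Finset in
theorem supersat {N M m : ℕ} (G : Finset (Fin m → Fin N))
    (h : ∀ T : Finset (Fin N), T.card = M → ∃ u ∈ G, univ.image u ⊆ T)
    (hinj : ∀ u ∈ G, Function.Injective u) (hmM : m ≤ M) (hMN : M ≤ N) :
    N.choose m ≤ G.card * M.choose m := by
  classical
  have key : (powersetCard M (univ : Finset (Fin N))).card * 1
      ≤ G.card * (N - m).choose (M - m) := by
    refine card_mul_le_card_mul (fun T u => univ.image u ⊆ T) ?_ ?_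
    · intro T hT
      obtain ⟨u, hu, hs⟩ := h T (mem_powersetCard.1 hT).2
      exact card_pos.2 ⟨u, by simp only [mem_bipartiteAbove]; exact ⟨hu, hs⟩⟩
    · intro u hu
      have hc : (univ.image u).card = m := by
        rw [card_image_of_injective _ (hinj u hu)]; simp
      have : (powersetCard (M - m) (univ.image u)ᶜ).card = (N - m).choose (M - m) := by
        rw [card_powersetCard, card_compl, hc]; simp
      rw [← this]
      refine card_le_card_of_injOn (fun T => T \ univ.image u) ?_ ?_
      · intro T hT
        have hT := hT
        simp only [mem_coe, mem_bipartiteBelow, mem_powersetCard] at hT ⊢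
        refine ⟨?_, ?_⟩
        · intro x hx
          rw [mem_sdiff] at hx
          exact mem_compl.2 hx.2
        · rw [card_sdiff_of_subset hT.2, hc, hT.1.2]
      · intro T hT T' hT' he
        simp only [mem_coe, mem_bipartiteBelow, mem_powersetCard] at hT hT' he
        rw [← sdiff_union_of_subset hT.2, ← sdiff_union_of_subset hT'.2, he]
  rw [card_powersetCard, card_univ, Fintype.card_fin, mul_one] at key
  have hpos : 0 < (N - m).choose (M - m) := Nat.choose_pos (by omega)
  have e := Nat.choose_mul (n := N) hmM
  refine Nat.le_of_mul_le_mul_right ?_ hpos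
  rw [← e]
  calc N.choose M * M.choose m ≤ (G.card * (N - m).choose (M - m)) * M.choose m :=
        Nat.mul_le_mul_right _ key
    _ = _ := by ring

open Finset in
theorem card_strictMono_le (k N : ℕ) :
    (univ.filter (fun u : Fin k → Fin N => StrictMono u)).card ≤ N.choose k := by
  classical
  have : (powersetCard k (univ : Finset (Fin N))).card = N.choose k := by simp
  rw [← this]
  refine card_le_card_of_injOn (fun u => univ.image u) ?_ ?_
  · intro u hu
    have hu : StrictMono u := by simpa using hu
    simp [card_image_of_injective _ hu.injective]
  · intro u hu v hv he
    have hu : StrictMono u := by simpa using hu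
    have hv : StrictMono v := by simpa using hv
    have he : univ.image u = univ.image v := he
    refine (StrictMono.range_inj hu hv).1 ?_
    have := congrArg (fun S : Finset (Fin N) => (S : Set (Fin N))) he
    simpa using this

/-- Copies of `H_{s,t}` with `m = s + t - 1` vertices, indexed by natural numbers. -/
def CopyN {V C : Type*} [LinearOrder V] [LinearOrder C] (χ : V → V → C) (s m : ℕ)
    (u : ℕ → V) : Prop :=
  (∀ i j, i < j → j < m → u i < u j) ∧
  (∀ i j k, i < j → j < k → k < s → k < m →
    χ (u j) (u k) ≤ χ (u i) (u j) ∧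
      (χ (u i) (u k) = χ (u i) (u j) ∨ χ (u i) (u k) = χ (u j) (u k))) ∧
  (∀ i, s - 2 ≤ i → i + 2 < m → χ (u (i + 1)) (u (i + 2)) ≤ χ (u i) (u (i + 1)))

theorem CopyN.congr {V C : Type*} [LinearOrder V] [LinearOrder C] {χ : V → V → C} {s m : ℕ}
    {u v : ℕ → V} (h : CopyN χ s m u) (e : ∀ i < m, v i = u i) : CopyN χ s m v := by
  obtain ⟨h1, h2, h3⟩ := h
  refine ⟨?_, ?_, ?_⟩
  · intro i j hij hj
    rw [e i (by omega), e j hj]; exact h1 i j hij hj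
  · intro i j k hij hjk hk hk'
    rw [e i (by omega), e j (by omega), e k hk']; exact h2 i j k hij hjk hk hk'
  · intro i hi hi'
    rw [e i (by omega), e (i + 1) (by omega), e (i + 2) (by omega)]; exact h3 i hi hi'

def toN {V : Type*} {q : ℕ} (u : Fin (q + 1) → V) (i : ℕ) : V :=
  if h : i < q + 1 then u ⟨i, h⟩ else u 0

theorem toN_lt {V : Type*} {q : ℕ} (u : Fin (q + 1) → V) {i : ℕ} (h : i < q + 1) :
    toN u i = u ⟨i, h⟩ := by simp [toN, h]

theorem hasHst_iff (n N s t : ℕ) (hst : 2 ≤ s + t) :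
    HasHstCopy n N s t ↔
      ∀ χ : Fin N → Fin N → Fin n, ∃ w : ℕ → Fin N, CopyN χ s (s + t - 1) w := by
  refine forall_congr' fun χ => ⟨?_, ?_⟩
  · rintro ⟨u, h1, h2, h3⟩
    refine ⟨fun i => if h : i < s + t - 1 then u ⟨i, h⟩ else u ⟨0, by omega⟩, ?_, ?_, ?_⟩
    · intro i j hij hj
      have hi : i < s + t - 1 := by omega
      simp only [hi, hj, dif_pos]
      exact h1 hij
    · intro i j k hij hjk hk hk'
      have hi : i < s + t - 1 := by omega
      have hj : j < s + t - 1 := by omega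
      simp only [hi, hj, hk', dif_pos]
      exact h2 ⟨i, hi⟩ ⟨j, hj⟩ ⟨k, hk'⟩ hij hjk hk
    · intro i hi hi'
      have a1 : i < s + t - 1 := by omega
      have a2 : i + 1 < s + t - 1 := by omega
      simp only [a1, a2, hi', dif_pos]
      exact h3 i hi (by omega)
  · rintro ⟨w, h1, h2, h3⟩
    refine ⟨fun i => w i, ?_, ?_, ?_⟩
    · intro i j hij
      exact h1 i j hij j.2
    · intro i j k hij hjk hk
      exact h2 i j k hij hjk hk k.2
    · intro i hi hi'
      exact h3 i hi (by omega)

theorem lastEdge {V C : Type*} [LinearOrder V] [LinearOrder C] {χ : V → V → C} {p m : ℕ}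
    {b : ℕ → V} (hp : 1 ≤ p) (hpm : p < m) (h : CopyN χ (p + 1) m b) (i j : ℕ)
    (hij : i < j) (hj : j ≤ p) : χ (b (p - 1)) (b p) ≤ χ (b i) (b j) := by
  have base : ∀ i, i < p → χ (b (p - 1)) (b p) ≤ χ (b i) (b p) := by
    intro i hi
    rcases Nat.lt_or_ge i (p - 1) with h' | h'
    · obtain ⟨a, c⟩ := h.2.1 i (p - 1) p h' (by omega) (by omega) hpm
      rcases c with c | c
      · rw [c]; exact a
      · rw [c]
    · have : i = p - 1 := by omega
      rw [this]
  rcases Nat.lt_or_ge j p with h' | h'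
  · exact (base j h').trans (h.2.1 i j p hij h' (by omega) hpm).1
  · have : j = p := by omega
    subst this
    exact base i hij

theorem core {V C : Type*} [LinearOrder V] [LinearOrder C] (χ : V → V → C) (p t m : ℕ)
    (hp : 1 ≤ p) (ht : 1 ≤ t) (hm : m = p + t + 1) (b : ℕ → V) (U : ℕ → ℕ → V)
    (hb : CopyN χ (p + 1) m b) (hU : ∀ j < m, CopyN χ (p + 1) m (U j))
    (hUb : ∀ j < m, U j p = b j)
    (hag : ∀ j < m, ∀ i < m, i ≠ p → U j i = U 0 i)
    (hc : ∀ j < m, ∀ i < p, χ (U j i) (U j p) = χ (U 0 i) (U 0 p))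
    (hd : ∀ j < m, χ (U j p) (U j (p + 1)) = χ (U 0 p) (U 0 (p + 1))) :
    ∃ w : ℕ → V, CopyN χ (p + 2) m w := by
  have hc' : ∀ j < m, ∀ i < p, χ (U 0 i) (b j) = χ (U 0 i) (U 0 p) := by
    intro j hj i hi
    rw [← hc j hj i hi, hag j hj i (by omega) (by omega), hUb j hj]
  have hd' : ∀ j < m, χ (b j) (U 0 (p + 1)) = χ (U 0 p) (U 0 (p + 1)) := by
    intro j hj
    rw [← hd j hj, hag j hj (p + 1) (by omega) (by omega), hUb j hj]
  have hU0 := hU 0 (by omega)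
  have hcl := lastEdge hp (by omega) hU0
  rcases le_or_gt (χ (b p) (b (p + 1))) (χ (U 0 (p - 1)) (U 0 p)) with hle | hlt
  · refine ⟨fun i => if i < p then U 0 i else b i, ?_, ?_, ?_⟩
    · intro i j hij hj
      by_cases h1 : j < p
      · have : i < p := by omega
        simp only [h1, this, if_true]
        exact hU0.1 i j hij hj
      · by_cases h2 : i < p
        · simp only [h1, h2, if_true, if_false]
          rw [← hUb j hj, ← hag j hj i (by omega) (by omega)]
          exact (hU j hj).1 i p h2 (by omega)
        · simp only [h1, h2, if_false]
          exact hb.1 i j hij hj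
    · intro i j k hij hjk hk hkm
      by_cases h1 : k < p
      · have a1 : i < p := by omega
        have a2 : j < p := by omega
        simp only [h1, a1, a2, if_true]
        exact hU0.2.1 i j k hij hjk (by omega) hkm
      · by_cases h2 : j < p
        · have a1 : i < p := by omega
          simp only [h1, a1, h2, if_true, if_false]
          rw [← hUb k hkm, ← hag k hkm i (by omega) (by omega),
            ← hag k hkm j (by omega) (by omega)]
          exact (hU k hkm).2.1 i j p hij h2 (by omega) (by omega)
        · have ej : j = p := by omega
          have ek : k = p + 1 := by omega
          subst ej ek
          simp only [h1, hij, h2, if_true, if_false]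
          rw [hc' j (by omega) i hij, hc' (j + 1) hkm i hij]
          exact ⟨hle.trans (hcl i j hij le_rfl), Or.inl rfl⟩
    · intro i hi him
      have a1 : ¬ i < p := by omega
      have a2 : ¬ i + 1 < p := by omega
      have a3 : ¬ i + 2 < p := by omega
      simp only [a1, a2, a3, if_false]
      exact hb.2.2 i (by omega) him
  · refine ⟨fun i => if i ≤ p then b i else U 0 i, ?_, ?_, ?_⟩
    · intro i j hij hj
      by_cases h1 : j ≤ p
      · have : i ≤ p := by omega
        simp only [h1, this, if_true]
        exact hb.1 i j hij hj
      · by_cases h2 : i ≤ p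
        · simp only [h1, h2, if_true, if_false]
          rw [← hUb i (by omega), ← hag i (by omega) j hj (by omega)]
          exact (hU i (by omega)).1 p j (by omega) hj
        · simp only [h1, h2, if_false]
          exact hU0.1 i j hij hj
    · intro i j k hij hjk hk hkm
      by_cases h1 : k ≤ p
      · have a1 : i ≤ p := by omega
        have a2 : j ≤ p := by omega
        simp only [h1, a1, a2, if_true]
        exact hb.2.1 i j k hij hjk (by omega) hkm
      · have ek : k = p + 1 := by omega
        subst ek
        have a1 : i ≤ p := by omega
        have a2 : j ≤ p := by omega
        simp only [h1, a1, a2, if_true, if_false]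
        rw [hd' i (by omega), hd' j (by omega)]
        refine ⟨?_, Or.inr rfl⟩
        have e1 := lastEdge hp (by omega) hb i j hij a2
        have e2 := hb.2.2 (p - 1) (by omega) (by omega)
        have e3 := hU0.2.2 (p - 1) (by omega) (by omega)
        rw [show p - 1 + 1 = p by omega, show p - 1 + 2 = p + 1 by omega] at e2 e3
        exact e3.trans (hlt.le.trans (e2.trans e1))
    · intro i hi him
      have a2 : ¬ i + 1 ≤ p := by omega
      have a3 : ¬ i + 2 ≤ p := by omega
      rcases Nat.lt_or_ge p i with h | h
      · have a1 : ¬ i ≤ p := by omega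
        simp only [a1, a2, a3, if_false]
        exact hU0.2.2 i (by omega) him
      · have ei : i = p := by omega
        subst ei
        simp only [le_refl, a2, a3, if_true, if_false]
        rw [hd' i (by omega)]
        exact hU0.2.2 i (by omega) him

open Finset in
theorem mainStep (p t n M : ℕ) (hp : 1 ≤ p) (ht : 1 ≤ t) (hn : 1 ≤ n)
    (hM : ∀ χ : Fin M → Fin M → Fin n, ∃ w : ℕ → Fin M, CopyN χ (p + 1) (p + t + 1) w)
    (N : ℕ) (hN : N = M ^ (p + t + 2) * n ^ (p + 1)) (χ : Fin N → Fin N → Fin n) :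
    ∃ w : ℕ → Fin N, CopyN χ (p + 2) (p + t + 1) w := by
  classical
  have hmM : p + t + 1 ≤ M := by
    obtain ⟨w, hw⟩ := hM (fun _ _ => ⟨0, hn⟩)
    have : Function.Injective (fun i : Fin (p + t + 1) => w i) := by
      have : StrictMono (fun i : Fin (p + t + 1) => w i) := fun i j hij => hw.1 i j hij j.2
      exact this.injective
    simpa using Fintype.card_le_of_injective _ this
  have hnp : 1 ≤ n ^ (p + 1) := Nat.one_le_pow _ _ hn
  have hMp : M ≤ M ^ (p + t + 1) := Nat.le_self_pow (by omega) M
  have hN' : N = M * (n ^ (p + 1) * M ^ (p + t + 1)) := by rw [hN]; ring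
  have hMN : M ≤ N := by
    rw [hN']
    exact Nat.le_mul_of_pos_right _ (Nat.mul_pos (by omega) (by omega))
  -- copies inside a set of size M
  have inSet : ∀ T : Finset (Fin N), T.card = M →
      ∃ b : ℕ → Fin N, CopyN χ (p + 1) (p + t + 1) b ∧ ∀ i, b i ∈ T := by
    intro T hT
    obtain ⟨w, h1, h2, h3⟩ := hM (fun x y => χ (T.orderEmbOfFin hT x) (T.orderEmbOfFin hT y))
    refine ⟨fun i => T.orderEmbOfFin hT (w i), ⟨?_, h2, h3⟩, fun i => orderEmbOfFin_mem _ _ _⟩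
    intro i j hij hj
    exact (T.orderEmbOfFin hT).strictMono (h1 i j hij hj)
  let G : Finset (Fin (p + t + 1) → Fin N) :=
    univ.filter (fun u => CopyN χ (p + 1) (p + t + 1) (toN u))
  have memG : ∀ u, u ∈ G ↔ CopyN χ (p + 1) (p + t + 1) (toN u) := by
    intro u; simp [G]
  have smG : ∀ u ∈ G, StrictMono u := by
    intro u hu i j hij
    have := ((memG u).1 hu).1 i j hij j.2
    rwa [toN_lt u i.2, toN_lt u j.2] at this
  have hG := supersat G (M := M) (by
    intro T hT
    obtain ⟨b, hb, hbT⟩ := inSet T hT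
    refine ⟨fun i => b i, (memG _).2 (hb.congr ?_), ?_⟩
    · intro i hi
      rw [toN_lt _ hi]
    · intro x hx
      obtain ⟨i, -, rfl⟩ := mem_image.1 hx
      exact hbT i) (fun u hu => (smG u hu).injective) hmM hMN
  let P : Fin (p + t + 1) := ⟨p, by omega⟩
  let key : (Fin (p + t + 1) → Fin N) → (Fin (p + t) → Fin N) × (Fin (p + 1) → Fin n) :=
    fun u => (u ∘ P.succAbove, fun i => if (i : ℕ) < p then χ (toN u i) (toN u p)
      else χ (toN u p) (toN u (p + 1)))
  let K : Finset ((Fin (p + t) → Fin N) × (Fin (p + 1) → Fin n)) :=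
    (univ.filter (fun u : Fin (p + t) → Fin N => StrictMono u)) ×ˢ univ
  have hK : K.card ≤ N.choose (p + t) * n ^ (p + 1) := by
    simp only [K, card_product]
    refine Nat.mul_le_mul (card_strictMono_le _ _) ?_
    simp
  have maps : ∀ u ∈ G, key u ∈ K := by
    intro u hu
    simp only [K, key, mem_product, mem_filter, mem_univ, true_and, and_true]
    exact (smG u hu).comp (Fin.strictMono_succAbove P)
  have count : K.card * (M - 1) < G.card := by
    by_contra hcon
    push Not at hcon
    have e1 := Nat.choose_succ_right_eq N (p + t)
    have e2 : M.choose (p + t + 1) * (p + t + 1) ≤ M ^ (p + t + 1) := by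
      obtain ⟨M', rfl⟩ : ∃ M', M = M' + 1 := ⟨M - 1, by omega⟩
      rw [← Nat.add_one_mul_choose_eq, pow_succ, mul_comm]
      refine Nat.mul_le_mul_right _ ((Nat.choose_le_pow _ _).trans ?_)
      exact Nat.pow_le_pow_left (by omega) _
    have hpos : 0 < N.choose (p + t) := Nat.choose_pos (by omega)
    have e3 : N.choose (p + t) * (N - (p + t)) ≤
        N.choose (p + t) * (n ^ (p + 1) * (M - 1) * M ^ (p + t + 1)) := by
      rw [← e1]
      calc N.choose (p + t + 1) * (p + t + 1)
          ≤ (G.card * M.choose (p + t + 1)) * (p + t + 1) := Nat.mul_le_mul_right _ hG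
        _ = G.card * (M.choose (p + t + 1) * (p + t + 1)) := by ring
        _ ≤ (N.choose (p + t) * n ^ (p + 1) * (M - 1)) * M ^ (p + t + 1) :=
            Nat.mul_le_mul (hcon.trans (Nat.mul_le_mul_right _ hK)) e2
        _ = _ := by ring
    have e4 := Nat.le_of_mul_le_mul_left e3 hpos
    have e5 : N = n ^ (p + 1) * (M - 1) * M ^ (p + t + 1) + n ^ (p + 1) * M ^ (p + t + 1) := by
      rw [hN']
      obtain ⟨M', rfl⟩ : ∃ M', M = M' + 1 := ⟨M - 1, by omega⟩
      simp only [Nat.add_sub_cancel]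
      ring
    have e6 : M ^ (p + t + 1) ≤ n ^ (p + 1) * M ^ (p + t + 1) := Nat.le_mul_of_pos_left _ hnp
    omega
  obtain ⟨κ, -, hκ⟩ := exists_lt_card_fiber_of_mul_lt_card_of_maps_to maps count
  set F := G.filter (fun u => key u = κ) with hF
  have agree : ∀ u ∈ F, ∀ v ∈ F, ∀ i < p + t + 1, i ≠ p → toN u i = toN v i := by
    intro u hu v hv i hi hip
    have h1 : u ∘ P.succAbove = v ∘ P.succAbove :=
      congrArg Prod.fst ((mem_filter.1 hu).2.trans (mem_filter.1 hv).2.symm)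
    rw [toN_lt _ hi, toN_lt _ hi]
    obtain ⟨j, hj⟩ := Fin.exists_succAbove_eq (x := (⟨i, hi⟩ : Fin (p + t + 1))) (y := P)
      (by intro h; exact hip (congrArg Fin.val h))
    rw [← hj]
    exact congrFun h1 j
  have cols : ∀ u ∈ F, ∀ v ∈ F, ∀ i : Fin (p + 1), (key u).2 i = (key v).2 i := by
    intro u hu v hv i
    rw [(mem_filter.1 hu).2, (mem_filter.1 hv).2]
  have inj : Set.InjOn (fun u : Fin (p + t + 1) → Fin N => toN u p) F := by
    intro u hu v hv he
    funext i
    by_cases h : (i : ℕ) = p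
    · have he : toN u p = toN v p := he
      have hi : i = ⟨p, by omega⟩ := Fin.ext h
      rw [toN_lt u (by omega), toN_lt v (by omega)] at he
      rw [hi]
      exact he
    · have := agree u hu v hv i i.2 h
      rwa [toN_lt _ i.2, toN_lt _ i.2] at this
  have hA : M ≤ (F.image (fun u => toN u p)).card := by
    rw [card_image_of_injOn inj]
    omega
  obtain ⟨T, hTA, hT⟩ := exists_subset_card_eq hA
  obtain ⟨b, hb, hbT⟩ := inSet T hT
  have : ∀ j, ∃ u ∈ F, toN u p = b j := fun j => mem_image.1 (hTA (hbT j))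
  choose U hUF hUb using this
  refine core χ p t (p + t + 1) hp ht rfl b (fun j => toN (U j)) hb ?_ ?_ ?_ ?_ ?_
  · intro j _
    exact (memG _).1 (mem_filter.1 (hUF j)).1
  · intro j _
    exact hUb j
  · intro j _ i hi hip
    exact agree _ (hUF j) _ (hUF 0) i hi hip
  · intro j _ i hi
    have := cols _ (hUF j) _ (hUF 0) ⟨i, by omega⟩
    simpa [key, hi] using this
  · intro j _
    have := cols _ (hUF j) _ (hUF 0) ⟨p, by omega⟩
    simpa [key] using this

/-- `f(n; s, t) ≤ f(n; s−1, t+1)^(s+t) · n^(s−1)` for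
`s ≥ 3`, `t ≥ 1`, `n ≥ 1`. -/
theorem stmt7 (s t n : ℕ) (hs : 3 ≤ s) (ht : 1 ≤ t) (hn : 1 ≤ n) :
    fFun n s t ≤ fFun n (s - 1) (t + 1) ^ (s + t) * n ^ (s - 1) := by
  obtain ⟨p, rfl⟩ : ∃ p, s = p + 2 := ⟨s - 2, by omega⟩
  have hp : 1 ≤ p := by omega
  rw [show p + 2 - 1 = p + 1 by omega, show p + 2 + t = p + t + 2 by omega]
  by_cases hne : {N | HasHstCopy n N (p + 1) (t + 1)}.Nonempty
  · have hM : HasHstCopy n (fFun n (p + 1) (t + 1)) (p + 1) (t + 1) := Nat.sInf_mem hne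
    rw [hasHst_iff _ _ _ _ (by omega), show p + 1 + (t + 1) - 1 = p + t + 1 by omega] at hM
    refine Nat.sInf_le ?_
    change HasHstCopy n _ (p + 2) t
    rw [hasHst_iff _ _ _ _ (by omega), show p + 2 + t - 1 = p + t + 1 by omega]
    exact mainStep p t n _ hp ht hn hM _ rfl
  · have hemp : {N | HasHstCopy n N (p + 2) t} = ∅ := by
      refine Set.eq_empty_of_forall_notMem fun N hN => hne ⟨N, ?_⟩
      change HasHstCopy n N (p + 2) t at hN
      change HasHstCopy n N (p + 1) (t + 1)
      rw [hasHst_iff _ _ _ _ (by omega), show p + 2 + t - 1 = p + t + 1 by omega] at hN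
      rw [hasHst_iff _ _ _ _ (by omega), show p + 1 + (t + 1) - 1 = p + t + 1 by omega]
      intro χ
      obtain ⟨w, h1, h2, h3⟩ := hN χ
      refine ⟨w, h1, fun i j k a b c d => h2 i j k a b (by omega) d, fun i hi him => ?_⟩
      rcases Nat.lt_or_ge i p with h | h
      · exact (h2 i (i + 1) (i + 2) (by omega) (by omega) (by omega) him).1
      · exact h3 i (by omega) him
    unfold fFun
    rw [hemp]
    simp
end

section
/- For all integers s ≥ 2 and t ≥ 1, there is a constant K = K(s,t) such that f(n; s, t) ≤ K · n^{C(s,t)} for all n ≥ 1, where C(s,t) = (s+t)^{s−1} − 3(s+t)^{s−2} + Σ_{i=0}^{s−3} (s−1−i)(s+t)^i. -/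
/-- The exponent `C(s,t) = (s+t)^(s−1) − 3(s+t)^(s−2) + Σ_{i=0}^{s−3} (s−1−i)(s+t)^i`. -/
def Cst (s t : ℕ) : ℕ :=
  (s + t) ^ (s - 1) - 3 * (s + t) ^ (s - 2) +
    ∑ i ∈ Finset.range (s - 2), (s - 1 - i) * (s + t) ^ i

/-- Copy of `H_{s,t}` with natural number indices. -/
def Cp {N n : ℕ} (χ : Fin N → Fin N → Fin n) (s t : ℕ) (u : ℕ → Fin N) : Prop :=
  (∀ i, i + 1 < s + t - 1 → u i < u (i + 1)) ∧
  (∀ i j k, i < j → j < k → k < s → NonIncTriple χ (u i) (u j) (u k)) ∧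
  (∀ i, s - 2 ≤ i → i + 2 ≤ s + t - 2 → χ (u (i + 1)) (u (i + 2)) ≤ χ (u i) (u (i + 1)))

lemma lt_of_consec {α : Type*} [Preorder α] (u : ℕ → α) (m : ℕ)
    (h : ∀ i, i + 1 < m → u i < u (i + 1)) (i j : ℕ) (hij : i < j) (hj : j < m) :
    u i < u j := by
  induction j with
  | zero => omega
  | succ j ih =>
    rcases Nat.lt_succ_iff_lt_or_eq.mp hij with h1 | h1
    · exact (ih h1 (by omega)).trans (h j hj)
    · subst h1; exact h i hj

/-- extend a function on `Fin m` to the naturals -/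
def extN {α : Type*} {m : ℕ} (p : Fin m) (w : Fin m → α) (i : ℕ) : α :=
  if h : i < m then w ⟨i, h⟩ else w p

lemma extN_of_lt {α : Type*} {m : ℕ} (p : Fin m) (w : Fin m → α) (i : ℕ) (h : i < m) :
    extN p w i = w ⟨i, h⟩ := by simp [extN, h]

lemma hasHst_of_cp {n N s t : ℕ} (hs : 2 ≤ s) (ht : 1 ≤ t)
    (h : ∀ χ : Fin N → Fin N → Fin n, ∃ u, Cp χ s t u) : HasHstCopy n N s t := by
  intro χ
  obtain ⟨u, h1, h2, h3⟩ := h χ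
  refine ⟨fun i => u i, ?_, ?_, ?_⟩
  · intro i j hij
    exact lt_of_consec u _ h1 i j hij j.2
  · intro i j k hij hjk hk
    exact h2 i j k hij hjk hk
  · intro i hi1 hi2
    exact h3 i hi1 hi2

lemma cp_of_hasHst {n N s t : ℕ} (hs : 2 ≤ s) (ht : 1 ≤ t) (h : HasHstCopy n N s t)
    (χ : Fin N → Fin N → Fin n) : ∃ u, Cp χ s t u := by
  obtain ⟨u, h1, h2, h3⟩ := h χ
  refine ⟨extN ⟨0, by omega⟩ u, ?_, ?_, ?_⟩
  · intro i hi
    rw [extN_of_lt _ _ i (by omega), extN_of_lt _ _ (i+1) (by omega)]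
    apply h1
    simp
  · intro i j k hij hjk hk
    rw [extN_of_lt _ _ i (by omega), extN_of_lt _ _ j (by omega), extN_of_lt _ _ k (by omega)]
    exact h2 _ _ _ (by simpa using hij) (by simpa using hjk) (by simpa using hk)
  · intro i hi1 hi2
    rw [extN_of_lt _ _ i (by omega), extN_of_lt _ _ (i+1) (by omega),
      extN_of_lt _ _ (i+2) (by omega)]
    exact h3 i hi1 hi2

open Classical in
lemma count_one {f N L : ℕ} (S : Finset (Fin f → Fin N)) (a : Fin f)
    (h : ∀ φ : Fin f → Fin N,
      (Finset.univ.filter (fun v => Function.update φ a v ∈ S)).card ≤ L) :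
    S.card * N ≤ N ^ f * L := by
  have e1 : (S ×ˢ (Finset.univ : Finset (Fin N))).card = S.card * N := by
    simp [Finset.card_product]
  have e2 : (S ×ˢ (Finset.univ : Finset (Fin N))).card ≤
      ((Finset.univ : Finset (Fin f → Fin N)).sigma
        (fun φ => Finset.univ.filter (fun v => Function.update φ a v ∈ S))).card := by
    apply Finset.card_le_card_of_injOn
      (fun x => (⟨Function.update x.1 a x.2, x.1 a⟩ : Σ _ : Fin f → Fin N, Fin N))
    · intro x hx
      simp at hx ⊢
      exact hx
    · rintro ⟨x, v⟩ hx ⟨y, w⟩ hy hxy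
      simp only [Sigma.mk.injEq, heq_eq_eq] at hxy
      obtain ⟨h1, h2⟩ := hxy
      have hv : v = w := by
        have := congrFun h1 a
        simpa using this
      refine Prod.ext ?_ hv
      funext b
      by_cases hb : b = a
      · subst hb; exact h2
      · have := congrFun h1 b
        simpa [hb] using this
  rw [← e1]
  refine e2.trans ?_
  rw [Finset.card_sigma]
  refine (Finset.sum_le_sum (fun φ _ => h φ)).trans ?_
  simp

open Classical in
lemma count_main {f N L m : ℕ} (P : (Fin m → Fin N) → Prop) (p : Fin m)
    (hP : ∀ φ : Fin f → Fin N, Function.Injective φ →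
      ∃ j : Fin m → Fin f, Function.Injective j ∧ P (φ ∘ j))
    (hN : f ^ 2 + f ^ m * L < N) :
    ∃ w : Fin m → Fin N,
      L < (Finset.univ.filter (fun v => P (Function.update w p v))).card := by
  by_contra hcon
  push Not at hcon
  let A : (Fin f × Fin f) → Finset (Fin f → Fin N) := fun ab =>
    Finset.univ.filter (fun φ => ab.1 ≠ ab.2 ∧ φ ab.1 = φ ab.2)
  let B : (Fin m → Fin f) → Finset (Fin f → Fin N) := fun j =>
    Finset.univ.filter (fun φ => Function.Injective j ∧ P (φ ∘ j))
  have hA : ∀ ab, (A ab).card * N ≤ N ^ f * 1 := by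
    rintro ⟨a, b⟩
    apply count_one _ a
    intro φ
    rw [Finset.card_le_one]
    intro v hv w hw
    simp only [A, Finset.mem_filter, Finset.mem_univ, true_and] at hv hw
    have h1 := hv.2
    have h2 := hw.2
    have hne : b ≠ a := fun h => hv.1 h.symm
    simp [hne] at h1 h2
    rw [h1, h2]
  have hB : ∀ j, (B j).card * N ≤ N ^ f * L := by
    intro j
    apply count_one _ (j p)
    intro φ
    refine le_trans (Finset.card_le_card ?_) (hcon (φ ∘ j))
    intro v hv
    simp only [B, Finset.mem_filter, Finset.mem_univ, true_and] at hv ⊢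
    rw [← Function.update_comp_eq_of_injective φ hv.1]
    exact hv.2
  have hcov : (Finset.univ : Finset (Fin f → Fin N)) ⊆
      Finset.univ.biUnion A ∪ Finset.univ.biUnion B := by
    intro φ _
    rw [Finset.mem_union, Finset.mem_biUnion, Finset.mem_biUnion]
    by_cases hφ : Function.Injective φ
    · right
      obtain ⟨j, h1, h2⟩ := hP φ hφ
      exact ⟨j, Finset.mem_univ _, by simp [B, h1, h2]⟩
    · left
      rw [Function.Injective] at hφ
      push Not at hφ
      obtain ⟨a, b, h1, h2⟩ := hφ
      exact ⟨(a, b), Finset.mem_univ _, by simp [A, h1, h2]⟩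
  have h1 : N ^ f ≤ ∑ ab, (A ab).card + ∑ j, (B j).card := by
    have := Finset.card_le_card hcov
    simp only [Finset.card_univ, Fintype.card_fun, Fintype.card_fin] at this
    refine this.trans ((Finset.card_union_le _ _).trans ?_)
    exact add_le_add Finset.card_biUnion_le Finset.card_biUnion_le
  have h2 : (∑ ab, (A ab).card) * N ≤ f ^ 2 * N ^ f := by
    rw [Finset.sum_mul]
    refine (Finset.sum_le_sum (fun ab _ => hA ab)).trans ?_
    simp [Finset.card_univ, sq]
  have h3 : (∑ j, (B j).card) * N ≤ f ^ m * (N ^ f * L) := by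
    rw [Finset.sum_mul]
    refine (Finset.sum_le_sum (fun ab _ => hB ab)).trans ?_
    simp [Finset.card_univ]
  have h4 : N ^ f * N ≤ N ^ f * (f ^ 2 + f ^ m * L) := by nlinarith
  have h5 : 0 < N ^ f := pow_pos (by omega) _
  have := Nat.le_of_mul_le_mul_left h4 h5
  omega

lemma cp_in_finset {n N f s t : ℕ} (hs : 2 ≤ s) (ht : 1 ≤ t) (h : HasHstCopy n f s t)
    (χ : Fin N → Fin N → Fin n) (B : Finset (Fin N)) (hB : B.card = f) :
    ∃ u, Cp χ s t u ∧ ∀ i, u i ∈ B := by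
  let e := B.orderEmbOfFin hB
  obtain ⟨u, h1, h2, h3⟩ := cp_of_hasHst hs ht h (fun a b => χ (e a) (e b))
  refine ⟨fun i => e (u i), ⟨?_, ?_, ?_⟩, fun i => Finset.orderEmbOfFin_mem B hB _⟩
  · intro i hi
    exact e.strictMono (h1 i hi)
  · intro i j k a b c
    exact h2 i j k a b c
  · intro i a b
    exact h3 i a b

lemma nonInc_ge {n N s : ℕ} (χ : Fin N → Fin N → Fin n) (z : ℕ → Fin N)
    (h : ∀ i j k, i < j → j < k → k < s → NonIncTriple χ (z i) (z j) (z k))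
    (i j : ℕ) (hij : i < j) (hj : j < s) :
    χ (z (s - 2)) (z (s - 1)) ≤ χ (z i) (z j) := by
  have key : ∀ i, i < s - 1 → χ (z (s - 2)) (z (s - 1)) ≤ χ (z i) (z (s - 1)) := by
    intro i hi
    by_cases h1 : i = s - 2
    · rw [h1]
    · obtain ⟨a, b⟩ := h i (s - 2) (s - 1) (by omega) (by omega) (by omega)
      rcases b with b | b <;> rw [b]
      exact a
  by_cases h1 : j = s - 1
  · subst h1; exact key i hij
  · exact (key j (by omega)).trans (h i j (s - 1) hij (by omega) (by omega)).1

/-- The combination step. -/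
lemma combine {n N s t : ℕ} (hs : 2 ≤ s) (ht : 1 ≤ t) (χ : Fin N → Fin N → Fin n)
    (W z : ℕ → Fin N) (B : Finset (Fin N))
    (hW : ∀ v ∈ B, Cp χ s (t + 1) (Function.update W (s - 1) v))
    (hz : Cp χ s (t + 1) z) (hzB : ∀ i, z i ∈ B)
    (hc1 : ∀ v ∈ B, ∀ v' ∈ B, ∀ i, i < s - 1 → χ (W i) v = χ (W i) v')
    (hc2 : ∀ v ∈ B, ∀ v' ∈ B, χ v (W s) = χ v' (W s)) :
    ∃ u, Cp χ (s + 1) t u := by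
  have up1 : ∀ v i, i ≠ s - 1 → Function.update W (s - 1) v i = W i := by
    intro v i hi; simp [hi]
  have up2 : ∀ v, Function.update W (s - 1) v (s - 1) = v := by
    intro v; simp
  obtain ⟨z1, z2, z3⟩ := hz
  -- facts about W
  have w1 : ∀ i, i + 1 < s - 1 → W i < W (i + 1) := by
    intro i hi
    have := (hW _ (hzB 0)).1 i (by omega)
    rwa [up1 _ _ (by omega), up1 _ _ (by omega)] at this
  have w1' : ∀ v ∈ B, W (s - 2) < v := by
    intro v hv
    have := (hW _ hv).1 (s - 2) (by omega)
    rwa [up1 _ _ (by omega), show s - 2 + 1 = s - 1 by omega, up2] at this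
  have w1'' : ∀ v ∈ B, v < W s := by
    intro v hv
    have := (hW _ hv).1 (s - 1) (by omega)
    rwa [up2, show s - 1 + 1 = s by omega, up1 _ _ (by omega)] at this
  have w1''' : ∀ i, s ≤ i → i + 1 < s + t → W i < W (i + 1) := by
    intro i hi hi2
    have := (hW _ (hzB 0)).1 i (by omega)
    rwa [up1 _ _ (by omega), up1 _ _ (by omega)] at this
  have w2 : ∀ i j k, i < j → j < k → k < s - 1 → NonIncTriple χ (W i) (W j) (W k) := by
    intro i j k hij hjk hk
    have := (hW _ (hzB 0)).2.1 i j k hij hjk (by omega)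
    rwa [up1 _ _ (by omega), up1 _ _ (by omega), up1 _ _ (by omega)] at this
  have w2' : ∀ v ∈ B, ∀ i j, i < j → j < s - 1 → NonIncTriple χ (W i) (W j) v := by
    intro v hv i j hij hj
    have := (hW _ hv).2.1 i j (s - 1) hij hj (by omega)
    rwa [up1 _ _ (by omega), up1 _ _ (by omega), up2] at this
  have w2'' : ∀ v ∈ B, ∀ i, i < s - 1 → χ (W (s - 2)) v ≤ χ (W i) v := by
    intro v hv i hi
    have := nonInc_ge χ _ (hW v hv).2.1 i (s - 1) hi (by omega)
    rwa [up1 v (s - 2) (by omega), up1 v i (by omega), up2] at this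
  have w3 : ∀ v ∈ B, χ v (W s) ≤ χ (W (s - 2)) v := by
    intro v hv
    have := (hW v hv).2.2 (s - 2) le_rfl (by omega)
    rwa [show s - 2 + 1 = s - 1 by omega, show s - 2 + 2 = s by omega, up2,
      up1 _ _ (by omega), up1 _ _ (by omega)] at this
  have w3' : ∀ v ∈ B, t ≥ 2 → χ (W s) (W (s + 1)) ≤ χ v (W s) := by
    intro v hv ht2
    have := (hW v hv).2.2 (s - 1) (by omega) (by omega)
    rwa [show s - 1 + 1 = s by omega, show s - 1 + 2 = s + 1 by omega, up2,
      up1 _ _ (by omega), up1 _ _ (by omega)] at this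
  have w3'' : ∀ i, s ≤ i → i + 2 ≤ s + t - 1 →
      χ (W (i + 1)) (W (i + 2)) ≤ χ (W i) (W (i + 1)) := by
    intro i hi hi2
    have := (hW _ (hzB 0)).2.2 i (by omega) (by omega)
    rwa [up1 _ _ (by omega), up1 _ _ (by omega), up1 _ _ (by omega)] at this
  by_cases hcase : χ (z (s - 2)) (z (s - 1)) ≤ χ (W (s - 2)) (z (s - 2))
  · -- prepend the `W` part
    let u : ℕ → Fin N := fun i => if i < s - 1 then W i else z (i - 1)
    have u1 : ∀ i, i < s - 1 → u i = W i := fun i hi => by simp [u, hi]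
    have u2 : ∀ i, s - 1 ≤ i → u i = z (i - 1) := fun i hi => by
      simp [u, Nat.not_lt.mpr hi]
    refine ⟨u, ?_, ?_, ?_⟩
    · intro i hi
      by_cases h1 : i + 1 < s - 1
      · rw [u1 _ (by omega), u1 _ h1]; exact w1 i h1
      · by_cases h2 : i + 1 = s - 1
        · rw [u1 _ (by omega), u2 _ (by omega), show i = s - 2 by omega]
          exact w1' _ (hzB _)
        · rw [u2 _ (by omega), u2 _ (by omega)]
          have := z1 (i - 1) (by omega)
          rwa [show i - 1 + 1 = i + 1 - 1 by omega] at this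
    · intro i j k hij hjk hk
      by_cases hj : j < s - 1
      · rw [u1 i (by omega), u1 j hj]
        by_cases hk2 : k < s - 1
        · rw [u1 k hk2]; exact w2 i j k hij hjk hk2
        · rw [u2 k (by omega)]; exact w2' _ (hzB _) i j hij hj
      · have hj' : j = s - 1 := by omega
        have hk' : k = s := by omega
        rw [u1 i (by omega), u2 j (by omega), u2 k (by omega), hj', hk',
          show s - 1 - 1 = s - 2 by omega]
        exact ⟨hcase.trans (w2'' _ (hzB _) i (by omega)),
          Or.inl (hc1 _ (hzB _) _ (hzB _) i (by omega))⟩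
    · intro i hi1 hi2
      rw [u2 i (by omega), u2 (i + 1) (by omega), u2 (i + 2) (by omega)]
      have := z3 (i - 1) (by omega) (by omega)
      rwa [show i - 1 + 1 = i + 1 - 1 by omega, show i - 1 + 2 = i + 2 - 1 by omega] at this
  · -- append the `W` part
    push Not at hcase
    let u : ℕ → Fin N := fun i => if i < s then z i else W i
    have u1 : ∀ i, i < s → u i = z i := fun i hi => by simp [u, hi]
    have u2 : ∀ i, s ≤ i → u i = W i := fun i hi => by
      simp [u, Nat.not_lt.mpr hi]
    refine ⟨u, ?_, ?_, ?_⟩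
    · intro i hi
      by_cases h1 : i + 1 < s
      · rw [u1 _ (by omega), u1 _ h1]; exact z1 i (by omega)
      · by_cases h2 : i + 1 = s
        · rw [u1 _ (by omega), u2 _ (by omega), h2]
          exact w1'' _ (hzB _)
        · rw [u2 _ (by omega), u2 _ (by omega)]
          exact w1''' i (by omega) (by omega)
    · intro i j k hij hjk hk
      rw [u1 i (by omega), u1 j (by omega)]
      by_cases hk2 : k < s
      · rw [u1 k hk2]; exact z2 i j k hij hjk hk2
      · have hk' : k = s := by omega
        rw [u2 k (by omega), hk']
        refine ⟨?_, Or.inr (hc2 _ (hzB _) _ (hzB _))⟩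
        rw [hc2 _ (hzB j) _ (hzB (s - 2))]
        exact ((w3 _ (hzB _)).trans hcase.le).trans (nonInc_ge χ z z2 i j hij (by omega))
    · intro i hi1 hi2
      by_cases h1 : i = s - 1
      · rw [u1 i (by omega), u2 (i + 1) (by omega), u2 (i + 2) (by omega)]
        have := w3' (z i) (hzB i) (by omega)
        rwa [show i + 1 = s by omega, show i + 2 = s + 1 by omega]
      · rw [u2 i (by omega), u2 (i + 1) (by omega), u2 (i + 2) (by omega)]
        exact w3'' i (by omega) (by omega)

open Classical in
lemma step {n f s t : ℕ} (hs : 2 ≤ s) (ht : 1 ≤ t) (hn : 1 ≤ n)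
    (h : HasHstCopy n f s (t + 1)) :
    HasHstCopy n (2 * f ^ (s + t + 1) * n ^ s + 1) (s + 1) t := by
  apply hasHst_of_cp (by omega) ht
  obtain ⟨N, hN⟩ : ∃ N, N = 2 * f ^ (s + t + 1) * n ^ s + 1 := ⟨_, rfl⟩
  rw [← hN]
  intro χ
  have hf : 1 ≤ f := by
    obtain ⟨u, _⟩ := cp_of_hasHst hs (by omega) h (fun _ _ => ⟨0, hn⟩)
    have := (u 0).2
    omega
  let p : Fin (s + t) := ⟨s - 1, by omega⟩
  obtain ⟨w, hw⟩ := count_main (f := f) (N := N) (L := f * n ^ s) (m := s + t)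
    (fun w => Cp χ s (t + 1) (extN p w)) p
    (by
      intro φ hφ
      obtain ⟨u, hu, huB⟩ := cp_in_finset hs (by omega) h χ (Finset.univ.image φ)
        (by rw [Finset.card_image_of_injective _ hφ]; simp)
      have huB' : ∀ i, ∃ a, φ a = u i := fun i => by simpa using huB i
      choose g hg using huB'
      have hlt := lt_of_consec u _ hu.1
      refine ⟨fun i => g i, ?_, ?_⟩
      · intro a b hab
        have hab' : u a = u b := by rw [← hg, ← hg]; exact congrArg φ hab
        rcases lt_trichotomy (a : ℕ) b with h1 | h1 | h1
        · exact absurd hab' (hlt _ _ h1 (by omega)).ne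
        · exact Fin.ext h1
        · exact absurd hab' (hlt _ _ h1 (by omega)).ne'
      · have e : ∀ i, i < s + t → extN p (φ ∘ fun i : Fin (s + t) => g i) i = u i := by
          intro i hi
          rw [extN_of_lt _ _ _ hi]
          exact hg i
        obtain ⟨h1, h2, h3⟩ := hu
        refine ⟨?_, ?_, ?_⟩
        · intro i hi
          rw [e _ (by omega), e _ (by omega)]; exact h1 i hi
        · intro i j k hij hjk hk
          rw [e _ (by omega), e _ (by omega), e _ (by omega)]; exact h2 i j k hij hjk hk
        · intro i hi1 hi2
          rw [e _ (by omega), e _ (by omega), e _ (by omega)]; exact h3 i hi1 hi2)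
    (by
      have h1 : f ^ 2 ≤ f ^ (s + t + 1) * n ^ s := by
        calc f ^ 2 ≤ f ^ (s + t + 1) := Nat.pow_le_pow_right hf (by omega)
          _ ≤ _ := Nat.le_mul_of_pos_right _ (pow_pos hn _)
      have h2 : f ^ (s + t) * (f * n ^ s) = f ^ (s + t + 1) * n ^ s := by ring
      rw [h2, hN]
      have : 2 * f ^ (s + t + 1) * n ^ s = 2 * (f ^ (s + t + 1) * n ^ s) := by ring
      omega)
  let W : ℕ → Fin N := extN p w
  let A := Finset.univ.filter (fun v => Cp χ s (t + 1) (extN p (Function.update w p v)))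
  let col : Fin N → (Fin s → Fin n) := fun v i => if (i : ℕ) < s - 1 then χ (W i) v else χ v (W s)
  obtain ⟨c, -, hc⟩ := Finset.exists_lt_card_fiber_of_mul_lt_card_of_maps_to
    (s := A) (t := (Finset.univ : Finset (Fin s → Fin n))) (f := col) (n := f)
    (fun _ _ => Finset.mem_univ _)
    (by simp only [Finset.card_univ, Fintype.card_fun, Fintype.card_fin]
        rw [mul_comm]; exact hw)
  obtain ⟨B, hBs, hBc⟩ := Finset.exists_subset_card_eq hc.le
  have hB : ∀ v ∈ B, v ∈ A ∧ col v = c := fun v hv => by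
    simpa using hBs hv
  obtain ⟨z, hz, hzB⟩ := cp_in_finset hs (by omega) h χ B hBc
  refine combine hs ht χ W z B ?_ hz hzB ?_ ?_
  · intro v hv
    have h1 := (hB v hv).1
    simp only [A, Finset.mem_filter, Finset.mem_univ, true_and] at h1
    have e : ∀ i, i < s + t → extN p (Function.update w p v) i =
        Function.update W (s - 1) v i := by
      intro i hi
      rw [extN_of_lt _ _ _ hi]
      by_cases hi2 : i = s - 1
      · subst hi2; simp [p]
      · have : (⟨i, hi⟩ : Fin (s + t)) ≠ p := by simp [p, hi2]
        simp [this, hi2, W, extN, hi]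
    obtain ⟨h1, h2, h3⟩ := h1
    refine ⟨?_, ?_, ?_⟩
    · intro i hi
      rw [← e _ (by omega), ← e _ (by omega)]; exact h1 i hi
    · intro i j k hij hjk hk
      rw [← e _ (by omega), ← e _ (by omega), ← e _ (by omega)]; exact h2 i j k hij hjk hk
    · intro i hi1 hi2
      rw [← e _ (by omega), ← e _ (by omega), ← e _ (by omega)]; exact h3 i hi1 hi2
  · intro v hv v' hv' i hi
    have h1 := congrFun ((hB v hv).2.trans (hB v' hv').2.symm) ⟨i, by omega⟩
    simpa [col, hi] using h1
  · intro v hv v' hv'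
    have h1 := congrFun ((hB v hv).2.trans (hB v' hv').2.symm) ⟨s - 1, by omega⟩
    simpa [col] using h1

/-- there is a non-increasing path with `l` edges ending at `v`, with last color at least `c` -/
def PathEnd {N n : ℕ} (χ : Fin N → Fin N → Fin n) : ℕ → Fin N → ℕ → Prop
  | 0, _, _ => True
  | l + 1, v, c => ∃ u, u < v ∧ c ≤ (χ u v : ℕ) + 1 ∧ PathEnd χ l u ((χ u v : ℕ) + 1)

lemma pathEnd_anti {N n : ℕ} (χ : Fin N → Fin N → Fin n) (l : ℕ) (v : Fin N) (c d : ℕ)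
    (hcd : c ≤ d) (h : PathEnd χ l v d) : PathEnd χ l v c := by
  cases l with
  | zero => trivial
  | succ l =>
    obtain ⟨u, h1, h2, h3⟩ := h
    exact ⟨u, h1, hcd.trans h2, h3⟩

lemma pathEnd_path {N n : ℕ} (χ : Fin N → Fin N → Fin n) (l : ℕ) (v : Fin N) (c : ℕ)
    (h : PathEnd χ l v c) : ∃ q : ℕ → Fin N, q l = v ∧ (∀ i, i + 1 ≤ l → q i < q (i + 1)) ∧
      (∀ i, i + 2 ≤ l → χ (q (i + 1)) (q (i + 2)) ≤ χ (q i) (q (i + 1))) ∧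
      (∀ i, i + 1 = l → c ≤ (χ (q i) (q (i + 1)) : ℕ) + 1) := by
  induction l generalizing v c with
  | zero => exact ⟨fun _ => v, rfl, by omega, by omega, by omega⟩
  | succ l ih =>
    obtain ⟨u, h1, h2, h3⟩ := h
    obtain ⟨q, q0, q1, q2, q3⟩ := ih u _ h3
    have up1 : ∀ i, i ≤ l → Function.update q (l + 1) v i = q i := by
      intro i hi
      have : i ≠ l + 1 := by omega
      simp [this]
    have up2 : Function.update q (l + 1) v (l + 1) = v := by simp
    refine ⟨Function.update q (l + 1) v, up2, ?_, ?_, ?_⟩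
    · intro i hi
      by_cases hil : i = l
      · subst hil; rw [up1 _ le_rfl, up2, q0]; exact h1
      · rw [up1 _ (by omega), up1 _ (by omega)]; exact q1 i (by omega)
    · intro i hi
      by_cases hil : i + 1 = l
      · have h4 := q3 i hil
        subst hil
        rw [up2, up1 _ le_rfl, up1 _ (by omega), q0]
        rw [q0] at h4
        rw [Fin.le_def]
        omega
      · rw [up1 _ (by omega), up1 _ (by omega), up1 _ (by omega)]; exact q2 i (by omega)
    · intro i hi
      have : i = l := by omega
      subst this
      rw [up1 _ le_rfl, up2, q0]; exact h2

open Classical in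
lemma base {n t : ℕ} : HasHstCopy n ((n + 1) ^ t + 1) 2 (t + 1) := by
  apply hasHst_of_cp le_rfl (by omega)
  intro χ
  let g : Fin ((n + 1) ^ t + 1) → (Fin t → Fin (n + 1)) := fun v l =>
    ⟨Nat.findGreatest (fun c => PathEnd χ (l + 1) v c) n,
      Nat.lt_succ_of_le (Nat.findGreatest_le _)⟩
  have hg : ∀ a b (l : ℕ) (c : ℕ), l < t → g a = g b → 0 < c → c ≤ n →
      PathEnd χ (l + 1) a c → PathEnd χ (l + 1) b c := by
    intro a b l c hl hab hc hcn h
    have h1 := congrArg Fin.val (congrFun hab ⟨l, hl⟩)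
    simp only [g] at h1
    have h2 := Nat.le_findGreatest (P := fun c => PathEnd χ (l + 1) a c) hcn h
    rw [h1] at h2
    have h3 := Nat.findGreatest_of_ne_zero (P := fun c => PathEnd χ (l + 1) b c) (n := n) rfl
      (by omega)
    exact pathEnd_anti χ _ _ _ _ h2 h3
  obtain ⟨a, b, hne, hab⟩ := Fintype.exists_ne_map_eq_of_card_lt g (by simp)
  have main : ∀ a b, a < b → g a = g b → ∃ u, Cp χ 2 (t + 1) u := by
    intro a b hlt hab
    have key : ∀ l, l ≤ t → PathEnd χ l a ((χ a b : ℕ) + 1) := by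
      intro l
      induction l with
      | zero => intro _; trivial
      | succ l ih =>
        intro hl
        exact hg b a l _ (by omega) hab.symm (by omega) (χ a b).2
          ⟨a, hlt, le_rfl, ih (by omega)⟩
    have h1 : PathEnd χ (t + 1) b 0 := ⟨a, hlt, by omega, key t le_rfl⟩
    obtain ⟨q, q0, q1, q2, q3⟩ := pathEnd_path χ _ _ _ h1
    exact ⟨q, fun i hi => q1 i (by omega), fun i j k _ _ _ => by omega,
      fun i _ hi => q2 i (by omega)⟩
  rcases lt_or_gt_of_ne hne with h1 | h1
  · exact main a b h1 hab
  · exact main b a h1 hab.symm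

lemma Cst_two (t : ℕ) : Cst 2 (t + 1) = t := by
  simp [Cst]; omega

lemma Cst_succ (r t : ℕ) :
    Cst (r + 3) t = Cst (r + 2) (t + 1) * (r + 2 + t + 1) + (r + 2) := by
  unfold Cst
  have e1 : r + 3 + t = r + 2 + t + 1 := by ring
  have e2 : r + 2 + (t + 1) = r + 2 + t + 1 := by ring
  rw [e1, e2]
  set m := r + 2 + t + 1 with hm
  obtain ⟨d, hd⟩ : ∃ d, m = d + 3 := ⟨r + t, by omega⟩
  have e3 : m ^ (r + 3 - 1) - 3 * m ^ (r + 3 - 2) = d * m ^ (r + 1) := by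
    have : m ^ (r + 3 - 1) = d * m ^ (r + 1) + 3 * m ^ (r + 1) := by
      rw [← add_mul, ← hd, show r + 3 - 1 = (r + 1) + 1 by omega, pow_succ]; ring
    rw [this, show r + 3 - 2 = r + 1 by omega]; omega
  have e4 : m ^ (r + 2 - 1) - 3 * m ^ (r + 2 - 2) = d * m ^ r := by
    have : m ^ (r + 2 - 1) = d * m ^ r + 3 * m ^ r := by
      rw [← add_mul, ← hd, show r + 2 - 1 = r + 1 by omega, pow_succ]; ring
    rw [this, show r + 2 - 2 = r by omega]; omega
  rw [e3, e4, show r + 3 - 2 = r + 1 by omega, show r + 2 - 2 = r by omega,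
    Finset.sum_range_succ', add_mul, Finset.sum_mul]
  have e5 : ∑ i ∈ Finset.range r, (r + 3 - 1 - (i + 1)) * m ^ (i + 1) =
      ∑ i ∈ Finset.range r, (r + 2 - 1 - i) * m ^ i * m := by
    apply Finset.sum_congr rfl
    intro i _
    rw [show r + 3 - 1 - (i + 1) = r + 2 - 1 - i by omega, pow_succ]; ring
  rw [e5, pow_succ]
  simp only [pow_zero, show r + 3 - 1 - 0 = r + 2 by omega]
  ring

lemma main_bound (r : ℕ) : ∀ t, ∃ K : ℕ, ∀ n : ℕ, 1 ≤ n →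
    ∃ N, N ≤ K * n ^ Cst (r + 2) (t + 1) ∧ HasHstCopy n N (r + 2) (t + 1) := by
  induction r with
  | zero =>
    intro t
    refine ⟨2 ^ t + 1, fun n hn => ⟨(n + 1) ^ t + 1, ?_, base⟩⟩
    rw [Nat.zero_add, Cst_two]
    have h1 : (n + 1) ^ t ≤ 2 ^ t * n ^ t := by
      rw [← mul_pow]; exact Nat.pow_le_pow_left (by omega) _
    have h2 : 0 < n ^ t := pow_pos hn _
    nlinarith
  | succ r ih =>
    intro t
    obtain ⟨K, hK⟩ := ih (t + 1)
    refine ⟨2 * K ^ (r + 2 + (t + 1) + 1) + 1, fun n hn => ?_⟩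
    obtain ⟨f, hf, hcopy⟩ := hK n hn
    refine ⟨_, ?_, step (by omega) (by omega) hn hcopy⟩
    rw [show r + 1 + 2 = r + 3 by ring, Cst_succ]
    have h1 : f ^ (r + 2 + (t + 1) + 1) ≤ K ^ (r + 2 + (t + 1) + 1) *
        n ^ (Cst (r + 2) (t + 1 + 1) * (r + 2 + (t + 1) + 1)) := by
      rw [pow_mul, ← mul_pow]; exact Nat.pow_le_pow_left hf _
    rw [pow_add n (Cst (r + 2) (t + 1 + 1) * (r + 2 + (t + 1) + 1)) (r + 2)]
    have h2 : 0 < n ^ (Cst (r + 2) (t + 1 + 1) * (r + 2 + (t + 1) + 1)) * n ^ (r + 2) :=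
      Nat.mul_pos (pow_pos hn _) (pow_pos hn _)
    have h3 := Nat.mul_le_mul_right (n ^ (r + 2)) h1
    generalize n ^ (Cst (r + 2) (t + 1 + 1) * (r + 2 + (t + 1) + 1)) = X at *
    generalize n ^ (r + 2) = Y at *
    generalize K ^ (r + 2 + (t + 1) + 1) = Z at *
    generalize f ^ (r + 2 + (t + 1) + 1) = U at *
    nlinarith

/-- for all `s ≥ 2`, `t ≥ 1` there is `K = K(s,t)` with
`f(n; s, t) ≤ K · n^(C(s,t))` for all `n ≥ 1`. -/
theorem stmt8 (s t : ℕ) (hs : 2 ≤ s) (ht : 1 ≤ t) :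
    ∃ K : ℕ, ∀ n : ℕ, 1 ≤ n → fFun n s t ≤ K * n ^ Cst s t := by
  obtain ⟨r, rfl⟩ : ∃ r, s = r + 2 := ⟨s - 2, by omega⟩
  obtain ⟨t, rfl⟩ : ∃ t', t = t' + 1 := ⟨t - 1, by omega⟩
  obtain ⟨K, hK⟩ := main_bound r t
  refine ⟨K, fun n hn => ?_⟩
  obtain ⟨N, h1, h2⟩ := hK n hn
  exact (Nat.sInf_le h2).trans h1
end

section
/- For every integer s ≥ 3 and every coloring χ of the pairs of {1,…,N} by colors in {1,…,n}, every non-increasing set of size 2^{2s−3} contains a lexicographic set of size s. -/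
theorem lex_aux {α β : Type*} [LinearOrder α] [Inhabited β] (f : α → α → β)
    (h : ∀ x y z, x < y → y < z → f x z = f x y ∨ f x z = f y z) :
    ∀ (m a b : ℕ) (S : Finset α), a + b = m → 2 ^ (a + b - 1) ≤ S.card →
      (∃ T ⊆ S, T.card = a + 1 ∧ ∃ c : α → β, ∀ x ∈ T, ∀ y ∈ T, x < y → f x y = c x) ∨
      (∃ T ⊆ S, T.card = b + 1 ∧ ∃ c : α → β, ∀ x ∈ T, ∀ y ∈ T, x < y → f x y = c y) := by
  intro m
  induction m with
  | zero =>
    intro a b S hm hS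
    have hne : S.Nonempty := by
      rw [← Finset.card_pos]; exact lt_of_lt_of_le (by positivity) hS
    obtain ⟨x, hx⟩ := hne
    left
    refine ⟨{x}, by simpa using hx, by simp; omega, fun _ => default, ?_⟩
    intro u hu v hv huv
    simp only [Finset.mem_singleton] at hu hv
    subst hu; subst hv; exact absurd huv (lt_irrefl _)
  | succ m ih =>
    intro a b S hm hS
    have hne : S.Nonempty := by
      rw [← Finset.card_pos]; exact lt_of_lt_of_le (by positivity) hS
    have triv : ∃ T ⊆ S, T.card = 0 + 1 ∧
        ∀ x ∈ T, ∀ y ∈ T, ¬ x < y := by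
      obtain ⟨x, hx⟩ := hne
      refine ⟨{x}, by simpa using hx, by simp, ?_⟩
      intro u hu v hv huv
      simp only [Finset.mem_singleton] at hu hv
      subst hu; subst hv; exact absurd huv (lt_irrefl _)
    obtain ⟨T, hTS, hT1, hT⟩ := triv
    rcases a with _ | a
    · left
      exact ⟨T, hTS, hT1, fun _ => default, fun x hx y hy hxy => absurd hxy (hT x hx y hy)⟩
    rcases b with _ | b
    · right
      exact ⟨T, hTS, hT1, fun _ => default, fun x hx y hy hxy => absurd hxy (hT x hx y hy)⟩
    have e1 : a + 1 + (b + 1) - 1 = (a + b) + 1 := by omega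
    rw [e1, pow_succ] at hS
    have hpos : 0 < 2 ^ (a + b) := by positivity
    classical
    set p := S.min' hne with hp
    set q := S.max' hne with hq
    have hpS : p ∈ S := S.min'_mem hne
    have hqS : q ∈ S := S.max'_mem hne
    have hpq : p < q := S.min'_lt_max'_of_card (by omega)
    set A := (S.erase p).filter (fun y => f p y = f p q) with hA
    set B := (S.erase q).filter (fun y => f y q = f p q) with hB
    have hqA : q ∈ A := by simp [hA, hqS, hpq.ne']
    have hpB : p ∈ B := by simp [hB, hpS, hpq.ne]
    have hsub : S ⊆ (A.erase q) ∪ B ∪ {q} := by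
      intro y hy
      by_cases h1 : y = q
      · simp [h1]
      by_cases h2 : y = p
      · simp [h2, hpB]
      have l1 : p < y := lt_of_le_of_ne (S.min'_le y hy) (Ne.symm h2)
      have l2 : y < q := lt_of_le_of_ne (S.le_max' y hy) h1
      rcases h p y q l1 l2 with h3 | h3
      · simp [hA, hy, h1, h2, h3]
      · simp [hB, hy, h1, h2, h3]
    have hcard : S.card ≤ A.card + B.card := by
      have h1 := Finset.card_le_card hsub
      have h2 := Finset.card_union_le (A.erase q ∪ B) {q}
      have h3 := Finset.card_union_le (A.erase q) B
      have h4 := Finset.card_erase_add_one hqA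
      simp only [Finset.card_singleton] at h2
      omega
    have hAS : A ⊆ S := (Finset.filter_subset _ _).trans (Finset.erase_subset _ _)
    have hBS : B ⊆ S := (Finset.filter_subset _ _).trans (Finset.erase_subset _ _)
    have hcase : 2 ^ (a + b) ≤ A.card ∨ 2 ^ (a + b) ≤ B.card := by omega
    rcases hcase with hc | hc
    · rcases ih a (b + 1) A (by omega) (by simpa [← add_assoc] using hc) with
        ⟨T, hTA, hTc, c, hcT⟩ | ⟨T, hTA, hTc, c, hcT⟩
      · left
        have hpT : p ∉ T := fun hh => by simpa [hA] using hTA hh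
        refine ⟨insert p T, Finset.insert_subset hpS (hTA.trans hAS), ?_,
          fun x => if x = p then f p q else c x, ?_⟩
        · rw [Finset.card_insert_of_notMem hpT, hTc]
        · intro x hx y hy hxy
          have hyS : y ∈ S := Finset.insert_subset hpS (hTA.trans hAS) hy
          have hxS : x ∈ S := Finset.insert_subset hpS (hTA.trans hAS) hx
          have hyp : y ≠ p := fun hh => by
            have := S.min'_le x hxS
            rw [hh] at hxy
            exact absurd hxy (not_lt.mpr this)
          have hyT : y ∈ T := (Finset.mem_insert.mp hy).resolve_left hyp
          by_cases hxp : x = p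
          · simp only [hxp, if_true]
            exact (Finset.mem_filter.mp (hTA hyT)).2
          · simp only [hxp, if_false]
            exact hcT x ((Finset.mem_insert.mp hx).resolve_left hxp) y hyT hxy
      · right
        exact ⟨T, hTA.trans hAS, hTc, c, hcT⟩
    · rcases ih (a + 1) b B (by omega) (by
          have : a + 1 + b - 1 = a + b := by omega
          rw [this]; exact hc) with
        ⟨T, hTA, hTc, c, hcT⟩ | ⟨T, hTA, hTc, c, hcT⟩
      · left
        exact ⟨T, hTA.trans hBS, hTc, c, hcT⟩
      · right
        have hpT : q ∉ T := fun hh => by simpa [hB] using hTA hh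
        refine ⟨insert q T, Finset.insert_subset hqS (hTA.trans hBS), ?_,
          fun x => if x = q then f p q else c x, ?_⟩
        · rw [Finset.card_insert_of_notMem hpT, hTc]
        · intro x hx y hy hxy
          have hyS : y ∈ S := Finset.insert_subset hqS (hTA.trans hBS) hy
          have hxq : x ≠ q := fun hh => by
            have := S.le_max' y hyS
            rw [hh] at hxy
            exact absurd hxy (not_lt.mpr this)
          have hxT : x ∈ T := (Finset.mem_insert.mp hx).resolve_left hxq
          by_cases hyq : y = q
          · simp only [hyq, if_true]
            exact (Finset.mem_filter.mp (hTA hxT)).2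
          · simp only [hyq, if_false]
            exact hcT x hxT y ((Finset.mem_insert.mp hy).resolve_left hyq) hxy

/-- for `s ≥ 3`, every non-increasing set of size `2^(2s−3)`
(given by a strictly monotone `g` all of whose triples are non-increasing) contains a
lexicographic set of size `s`: a subset (selected by a strictly monotone
`e : Fin s → Fin (2^(2s−3))`) for which there exist colors `c_1, …, c_{s−1}` with either
`χ(x_i, x_j) = c_i` for all `i < j`, or `χ(x_i, x_j) = c_{j−1}` for all `i < j`.
In 0-indexed form the colors are `c : Fin s → Fin n` (the value at the last index is
unconstrained), the forward condition reads `χ (x i) (x j) = c i` and the backward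
condition reads `χ (x i) (x j) = c (j − 1)`. -/
theorem stmt9 (s N n : ℕ) (hs : 3 ≤ s) (χ : Fin N → Fin N → Fin n)
    (g : Fin (2 ^ (2 * s - 3)) → Fin N) (hg : StrictMono g)
    (hni : ∀ i j k : Fin (2 ^ (2 * s - 3)), i < j → j < k →
      NonIncTriple χ (g i) (g j) (g k)) :
    ∃ e : Fin s → Fin (2 ^ (2 * s - 3)), StrictMono e ∧
      ∃ c : Fin s → Fin n,
        ((∀ i j : Fin s, i < j → χ (g (e i)) (g (e j)) = c i) ∨
         (∀ i j : Fin s, i < j →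
            χ (g (e i)) (g (e j)) = c ⟨(j : ℕ) - 1, lt_of_le_of_lt (Nat.sub_le _ _) j.isLt⟩)) := by
  have hM : 0 < 2 ^ (2 * s - 3) := by positivity
  haveI : Inhabited (Fin n) := ⟨χ (g ⟨0, hM⟩) (g ⟨0, hM⟩)⟩
  have key := lex_aux (fun i j => χ (g i) (g j))
    (fun x y z hxy hyz => (hni x y z hxy hyz).2) _ (s - 1) (s - 1) Finset.univ rfl (by
      have : s - 1 + (s - 1) - 1 = 2 * s - 3 := by omega
      rw [this]; simp)
  have hs1 : s - 1 + 1 = s := by omega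
  rw [hs1] at key
  rcases key with ⟨T, -, hT, c, hc⟩ | ⟨T, -, hT, c, hc⟩
  · refine ⟨T.orderEmbOfFin hT, (T.orderEmbOfFin hT).strictMono,
      fun i => c (T.orderEmbOfFin hT i), Or.inl ?_⟩
    intro i j hij
    exact hc _ (T.orderEmbOfFin_mem hT i) _ (T.orderEmbOfFin_mem hT j)
      ((T.orderEmbOfFin hT).strictMono hij)
  · refine ⟨T.orderEmbOfFin hT, (T.orderEmbOfFin hT).strictMono,
      fun i => if h : (i : ℕ) + 1 < s then c (T.orderEmbOfFin hT ⟨(i : ℕ) + 1, h⟩) else default,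
      Or.inr ?_⟩
    intro i j hij
    have hj : (j : ℕ) - 1 + 1 = j := by
      have : (i : ℕ) < j := hij
      omega
    have := hc _ (T.orderEmbOfFin_mem hT i) _ (T.orderEmbOfFin_mem hT j)
      ((T.orderEmbOfFin hT).strictMono hij)
    simp only [hj, j.isLt, dif_pos]
    exact this
end

section
/- For all integers m, t ≥ 1, every red/blue edge-coloring of the complete graph on {1,…,N}, where N = (R(K_t,K_t) − 1)·m^2 + 1, contains a monochromatic t-clique chain consisting of m cliques. -/
/-- `χ i j` is the color of the edge `{i, j}` for `i < j`: `true` = red, `false` = blue.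
The classical Ramsey property: every red/blue coloring of `K_N` contains a red `K_s`
or a blue `K_n`. -/
def HasRamseyProp (s n N : ℕ) : Prop :=
  ∀ χ : Fin N → Fin N → Bool,
    (∃ f : Fin s → Fin N, StrictMono f ∧ ∀ i j : Fin s, i < j → χ (f i) (f j) = true) ∨
    (∃ f : Fin n → Fin N, StrictMono f ∧ ∀ i j : Fin n, i < j → χ (f i) (f j) = false)

/-- The classical Ramsey number `R(K_s, K_n)`. -/
noncomputable def ramsey (s n : ℕ) : ℕ := sInf {N | HasRamseyProp s n N}

/-- A `b`-monochromatic `t`-clique chain with `m` cliques: cliques `X_0, …, X_{m−1}`,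
each of size `t`, all of whose internal edges have color `b`, such that consecutive
cliques intersect in exactly one vertex, which is the largest element of the earlier
clique and the smallest element of the later one. -/
def IsCliqueChain {N : ℕ} (χ : Fin N → Fin N → Bool) (b : Bool) (t m : ℕ)
    (X : Fin m → Finset (Fin N)) : Prop :=
  (∀ i : Fin m, (X i).card = t) ∧
  (∀ i : Fin m, ∀ a ∈ X i, ∀ c ∈ X i, a < c → χ a c = b) ∧
  (∀ (i : ℕ) (h1 : i < m) (h2 : i + 1 < m),
    (X ⟨i, h1⟩ ∩ X ⟨i + 1, h2⟩).card = 1 ∧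
    ∃ z : Fin N, z ∈ X ⟨i, h1⟩ ∧ z ∈ X ⟨i + 1, h2⟩ ∧
      (∀ a ∈ X ⟨i, h1⟩, a ≤ z) ∧ (∀ c ∈ X ⟨i + 1, h2⟩, z ≤ c))

/-- Finset version of Ramsey's theorem. -/
theorem ramsey_finset (s n : ℕ) : ∃ K : ℕ, ∀ (M : ℕ) (χ : Fin M → Fin M → Bool)
    (A : Finset (Fin M)), K ≤ A.card →
    (∃ S ⊆ A, S.card = s ∧ ∀ a ∈ S, ∀ c ∈ S, a < c → χ a c = true) ∨
    (∃ S ⊆ A, S.card = n ∧ ∀ a ∈ S, ∀ c ∈ S, a < c → χ a c = false) := by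
  induction s generalizing n with
  | zero => exact ⟨0, fun M χ A _ => Or.inl ⟨∅, by simp⟩⟩
  | succ s ihs =>
    induction n with
    | zero => exact ⟨0, fun M χ A _ => Or.inr ⟨∅, by simp⟩⟩
    | succ n ihn =>
      obtain ⟨K1, h1⟩ := ihs (n + 1)
      obtain ⟨K2, h2⟩ := ihn
      refine ⟨K1 + K2 + 1, fun M χ A hA => ?_⟩
      have hne : A.Nonempty := Finset.card_pos.1 (by omega)
      obtain ⟨a, haA, hmin⟩ : ∃ a ∈ A, ∀ x ∈ A, a ≤ x :=
        ⟨A.min' hne, A.min'_mem hne, fun x hx => A.min'_le x hx⟩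
      have hsplit := Finset.card_filter_add_card_filter_not (s := A.erase a)
        (fun x => χ a x = true)
      rw [Finset.card_erase_of_mem haA] at hsplit
      have key : ∀ (b : Bool) (S : Finset (Fin M)) (k : ℕ),
          (∀ x ∈ S, x ∈ A ∧ x ≠ a ∧ χ a x = b) → S.card = k →
          (∀ x ∈ S, ∀ y ∈ S, x < y → χ x y = b) →
          ∃ T ⊆ A, T.card = k + 1 ∧ ∀ x ∈ T, ∀ y ∈ T, x < y → χ x y = b := by
        intro b S k hS hk hm
        refine ⟨insert a S, ?_, ?_, ?_⟩
        · intro x hx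
          rcases Finset.mem_insert.1 hx with rfl | hx
          · exact haA
          · exact (hS x hx).1
        · rw [Finset.card_insert_of_notMem (fun h => (hS a h).2.1 rfl), hk]
        · intro x hx y hy hxy
          rcases Finset.mem_insert.1 hx with rfl | hx' <;>
          rcases Finset.mem_insert.1 hy with rfl | hy'
          · exact absurd hxy (lt_irrefl _)
          · exact (hS y hy').2.2
          · exact absurd (hmin x (hS x hx').1) (not_le.2 hxy)
          · exact hm x hx' y hy' hxy
      rcases le_or_gt K1 ((A.erase a).filter (fun x => χ a x = true)).card with h | h
      · rcases h1 M χ _ h with ⟨S, hS, hc, hm⟩ | ⟨S, hS, hc, hm⟩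
        · refine Or.inl (key true S s (fun x hx => ?_) hc hm)
          have := hS hx
          simp only [Finset.mem_filter, Finset.mem_erase] at this
          exact ⟨this.1.2, this.1.1, this.2⟩
        · refine Or.inr ⟨S, fun x hx => ?_, hc, hm⟩
          have := hS hx
          simp only [Finset.mem_filter, Finset.mem_erase] at this
          exact this.1.2
      · rcases h2 M χ ((A.erase a).filter (fun x => ¬ χ a x = true)) (by omega) with
          ⟨S, hS, hc, hm⟩ | ⟨S, hS, hc, hm⟩
        · refine Or.inl ⟨S, fun x hx => ?_, hc, hm⟩
          have := hS hx
          simp only [Finset.mem_filter, Finset.mem_erase] at this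
          exact this.1.2
        · refine Or.inr (key false S n (fun x hx => ?_) hc hm)
          have := hS hx
          simp only [Finset.mem_filter, Finset.mem_erase] at this
          exact ⟨this.1.2, this.1.1, by simpa using this.2⟩

theorem hasRamseyProp_ramsey (s n : ℕ) : HasRamseyProp s n (ramsey s n) := by
  apply Nat.sInf_mem (s := {N | HasRamseyProp s n N})
  obtain ⟨K, hK⟩ := ramsey_finset s n
  refine ⟨K, fun χ => ?_⟩
  rcases hK K χ Finset.univ (by simp) with ⟨S, -, hc, hm⟩ | ⟨S, -, hc, hm⟩
  · exact Or.inl ⟨S.orderEmbOfFin hc, (S.orderEmbOfFin hc).strictMono, fun i j hij =>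
      hm _ (S.orderEmbOfFin_mem hc i) _ (S.orderEmbOfFin_mem hc j)
        ((S.orderEmbOfFin hc).strictMono hij)⟩
  · exact Or.inr ⟨S.orderEmbOfFin hc, (S.orderEmbOfFin hc).strictMono, fun i j hij =>
      hm _ (S.orderEmbOfFin_mem hc i) _ (S.orderEmbOfFin_mem hc j)
        ((S.orderEmbOfFin hc).strictMono hij)⟩

/-- `S` is a `b`-colored `t`-clique with smallest element `u` and largest element `v`. -/
def CliqueFromTo {N : ℕ} (χ : Fin N → Fin N → Bool) (b : Bool) (t : ℕ)
    (S : Finset (Fin N)) (u v : Fin N) : Prop :=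
  S.card = t ∧ (∀ a ∈ S, ∀ c ∈ S, a < c → χ a c = b) ∧ u ∈ S ∧ v ∈ S ∧
    ∀ x ∈ S, u ≤ x ∧ x ≤ v

/-- A `b`-colored chain of `k` cliques ends at `v`. -/
def Reach {N : ℕ} (χ : Fin N → Fin N → Bool) (b : Bool) (t : ℕ) : ℕ → Fin N → Prop
  | 0, _ => True
  | k + 1, v => ∃ u, Reach χ b t k u ∧ ∃ S, CliqueFromTo χ b t S u v

theorem Reach.exists_chain {N : ℕ} {χ : Fin N → Fin N → Bool} {b : Bool} {t : ℕ} (k : ℕ)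
    (v : Fin N) (h : Reach χ b t k v) :
    ∃ (X : ℕ → Finset (Fin N)) (z : ℕ → Fin N), z k = v ∧
      ∀ i < k, CliqueFromTo χ b t (X i) (z i) (z (i + 1)) := by
  induction k generalizing v with
  | zero => exact ⟨fun _ => ∅, fun _ => v, rfl, fun i hi => absurd hi (Nat.not_lt_zero i)⟩
  | succ k ih =>
    obtain ⟨u, hu, S, hS⟩ := h
    obtain ⟨X, z, hz, hX⟩ := ih u hu
    refine ⟨fun i => if i = k then S else X i, fun i => if i = k + 1 then v else z i,
      by simp, fun i hi => ?_⟩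
    rcases Nat.lt_succ_iff_lt_or_eq.1 hi with hi | rfl
    · have e1 : i ≠ k := by omega
      have e2 : i ≠ k + 1 := by omega
      simpa [e1, e2] using hX i hi
    · simpa [hz] using hS

theorem isCliqueChain_of_reach {N : ℕ} {χ : Fin N → Fin N → Bool} {b : Bool} {t m : ℕ}
    {v : Fin N} (h : Reach χ b t m v) :
    ∃ X : Fin m → Finset (Fin N), IsCliqueChain χ b t m X := by
  obtain ⟨X, z, -, hX⟩ := Reach.exists_chain m v h
  refine ⟨fun i => X i, fun i => (hX i i.2).1, fun i => (hX i i.2).2.1, fun i h1 h2 => ?_⟩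
  obtain ⟨-, -, -, ha, hb⟩ := hX i h1
  obtain ⟨-, -, hc, -, hd⟩ := hX (i + 1) h2
  refine ⟨Finset.card_eq_one.2 ⟨z (i + 1), ?_⟩, z (i + 1), ha, hc,
    fun x hx => (hb x hx).2, fun x hx => (hd x hx).1⟩
  ext x
  simp only [Finset.mem_inter, Finset.mem_singleton]
  constructor
  · rintro ⟨h3, h4⟩
    exact le_antisymm (hb x h3).2 (hd x h4).1
  · rintro rfl
    exact ⟨ha, hc⟩

/-- for `m, t ≥ 1`, every red/blue edge-coloring of `K_N` with
`N = (R(K_t,K_t) − 1)·m² + 1` contains a monochromatic `t`-clique chain of `m`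
cliques. -/
theorem stmt12 (m t N : ℕ) (hm : 1 ≤ m) (ht : 1 ≤ t)
    (hN : N = (ramsey t t - 1) * m ^ 2 + 1) (χ : Fin N → Fin N → Bool) :
    ∃ (b : Bool) (X : Fin m → Finset (Fin N)), IsCliqueChain χ b t m X := by
  classical
  by_contra hcon
  have hno : ∀ b v, ¬ Reach χ b t m v := fun b v h => hcon ⟨b, isCliqueChain_of_reach h⟩
  let r : Bool → Fin N → ℕ := fun b v => Nat.findGreatest (fun k => Reach χ b t k v) m
  have hr : ∀ b v, Reach χ b t (r b v) v := fun b v =>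
    Nat.findGreatest_spec (P := fun k => Reach χ b t k v) (Nat.zero_le m) trivial
  have hlt : ∀ b v, r b v < m := fun b v =>
    lt_of_le_of_ne (Nat.findGreatest_le m) (fun h => hno b v (h ▸ hr b v))
  have hstep : ∀ b u v S, CliqueFromTo χ b t S u v → r b u < r b v := fun b u v S hS =>
    Nat.le_findGreatest (P := fun k => Reach χ b t k v) (hlt b u) ⟨u, hr b u, S, hS⟩
  obtain ⟨y, -, hy⟩ := Finset.exists_lt_card_fiber_of_mul_lt_card_of_maps_to
    (s := (Finset.univ : Finset (Fin N))) (t := Finset.range m ×ˢ Finset.range m)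
    (f := fun v => (r true v, r false v)) (n := ramsey t t - 1)
    (fun v _ => by simp [hlt]) (by
      simp only [Finset.card_product, Finset.card_range, Finset.card_univ, Fintype.card_fin]
      rw [hN, mul_comm, pow_two]
      omega)
  set F := (Finset.univ : Finset (Fin N)).filter (fun v => (r true v, r false v) = y) with hF
  have hle : ramsey t t ≤ F.card := by omega
  let e := F.orderEmbOfCardLe hle
  have heq : ∀ b i j, r b (e i) = r b (e j) := by
    intro b i j
    have h1 := (Finset.mem_filter.1 (F.orderEmbOfCardLe_mem hle i)).2
    have h2 := (Finset.mem_filter.1 (F.orderEmbOfCardLe_mem hle j)).2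
    have h3 := h1.trans h2.symm
    rw [Prod.mk.injEq] at h3
    cases b
    · exact h3.2
    · exact h3.1
  have fin : ∀ b (f : Fin t → Fin (ramsey t t)), StrictMono f →
      (∀ i j : Fin t, i < j → χ (e (f i)) (e (f j)) = b) → False := by
    intro b f hf hc
    have hmono : StrictMono (fun i => e (f i)) := e.strictMono.comp hf
    have := hstep b (e (f ⟨0, ht⟩)) (e (f ⟨t - 1, by omega⟩))
      (Finset.univ.image (fun i => e (f i))) ⟨?_, ?_, ?_, ?_, ?_⟩
    · rw [heq b (f ⟨0, ht⟩) (f ⟨t - 1, by omega⟩)] at this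
      exact lt_irrefl _ this
    · rw [Finset.card_image_of_injective _ hmono.injective]
      simp
    · intro a ha c hc' hac
      obtain ⟨i, -, rfl⟩ := Finset.mem_image.1 ha
      obtain ⟨j, -, rfl⟩ := Finset.mem_image.1 hc'
      exact hc i j (hmono.lt_iff_lt.1 hac)
    · exact Finset.mem_image.2 ⟨_, Finset.mem_univ _, rfl⟩
    · exact Finset.mem_image.2 ⟨_, Finset.mem_univ _, rfl⟩
    · intro x hx
      obtain ⟨i, -, rfl⟩ := Finset.mem_image.1 hx
      exact ⟨hmono.monotone (Fin.mk_le_of_le_val (Nat.zero_le _)),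
        hmono.monotone (Fin.le_def.2 (by have := i.2; simp only; omega))⟩
  rcases hasRamseyProp_ramsey t t (fun i j => χ (e i) (e j)) with ⟨f, hf, hc⟩ | ⟨f, hf, hc⟩
  · exact fin true f hf hc
  · exact fin false f hf hc
end

section
/- For every q ≥ 1, every M, n ≥ 1 and all functions χ_0,…,χ_{q−1} : {1,…,M} → {1,…,n}, there exists a (χ_0,…,χ_{q−1})-forest F with |L(F)| ≥ M/2^{q−1} − n. -/
/-- A `(χ_0, …, χ_{q−1})`-forest: a balanced well-ordered rooted forest of depth `q`
with vertex set contained in `{1, …, M}` (modeled as `Fin M`), such that for every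
vertex `a` at depth `d ≤ q − 1`, `χ_d(a) ≥ χ_d(a')` for every child `a'` of `a`.
The forest is encoded by its vertex set `verts`, a parent map `par` (roots have
parent `none`) and a depth function `dep`. -/
structure ChiForest (M n q : ℕ) (χ : Fin q → Fin M → Fin n) where
  verts : Finset (Fin M)
  par : Fin M → Option (Fin M)
  dep : Fin M → ℕ
  /-- parents of vertices are vertices -/
  par_mem : ∀ v ∈ verts, ∀ u : Fin M, par v = some u → u ∈ verts
  /-- the roots are exactly the vertices of depth `0` -/
  root_iff : ∀ v ∈ verts, (par v = none ↔ dep v = 0)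
  /-- depth increases by one along edges -/
  dep_par : ∀ v ∈ verts, ∀ u : Fin M, par v = some u → dep v = dep u + 1
  /-- the forest has depth `q` -/
  depth_le : ∀ v ∈ verts, dep v ≤ q
  /-- balanced: every leaf (vertex with no children) is at depth `q` -/
  balanced : ∀ v ∈ verts, (∀ u ∈ verts, par u ≠ some v) → dep v = q
  /-- well-ordered, part 1: every vertex comes before all of its descendants -/
  desc_gt : ∀ u ∈ verts, ∀ v ∈ verts,
    Relation.TransGen (fun a b : Fin M => par a = some b) u v → v < u
  /-- well-ordered, part 2: for vertices `y < y'` of the same depth, all descendants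
  of `y` come before `y'` -/
  well_ordered : ∀ y ∈ verts, ∀ y' ∈ verts, dep y = dep y' → y < y' →
    ∀ u ∈ verts, Relation.TransGen (fun a b : Fin M => par a = some b) u y → u < y'
  /-- for a vertex `a` at depth `d`, `χ_d(a) ≥ χ_d(a')` for every child `a'` of `a` -/
  chi_mono : ∀ a ∈ verts, ∀ a' ∈ verts, par a' = some a →
    ∀ d : Fin q, (d : ℕ) = dep a → χ d a' ≤ χ d a

/-- A forest of depth `q` described by its leaves and the root-to-leaf paths. -/
structure PathForest {M n : ℕ} (q : ℕ) (χ : ℕ → Fin M → Fin n) (S L : Finset (Fin M))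
    (P : Fin M → ℕ → Fin M) : Prop where
  mem : ∀ x ∈ L, ∀ d ≤ q, P x d ∈ S
  last : ∀ x ∈ L, P x q = x
  lt : ∀ x ∈ L, ∀ d < q, P x d < P x (d + 1)
  chi : ∀ x ∈ L, ∀ d < q, χ d (P x (d + 1)) ≤ χ d (P x d)
  ord : ∀ x ∈ L, ∀ y ∈ L, x < y → ∀ d ≤ q, P x d = P y d ∨ x < P y d

namespace PathForest

variable {M n q : ℕ} {χ : ℕ → Fin M → Fin n} {S L : Finset (Fin M)} {P : Fin M → ℕ → Fin M}

theorem lt' (h : PathForest q χ S L P) {x : Fin M} (hx : x ∈ L) {d e : ℕ} (hde : d < e)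
    (he : e ≤ q) : P x d < P x e := by
  induction e with
  | zero => omega
  | succ e ih =>
    rcases Nat.lt_succ_iff_lt_or_eq.mp hde with h1 | h1
    · exact (ih h1 (by omega)).trans (h.lt x hx e (by omega))
    · subst h1; exact h.lt x hx d (by omega)

theorem le_self (h : PathForest q χ S L P) {x : Fin M} (hx : x ∈ L) {d : ℕ} (hd : d ≤ q) :
    P x d ≤ x := by
  rcases hd.lt_or_eq with h1 | h1
  · have := h.lt' hx h1 le_rfl
    rw [h.last x hx] at this
    exact this.le
  · subst h1; exact (h.last x hx).le

theorem not_lt_dep (h : PathForest q χ S L P) {x y : Fin M} (hx : x ∈ L) (hy : y ∈ L) {d e : ℕ}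
    (he : e ≤ q) (hde : d < e) : P x d ≠ P y e := by
  intro heq
  have h1 := h.lt' hy hde he
  rcases lt_trichotomy x y with hxy | hxy | hxy
  · rcases h.ord x hx y hy hxy d (by omega) with h2 | h2
    · rw [← h2, heq] at h1; exact lt_irrefl _ h1
    · have := h.le_self hx (d := d) (by omega)
      rw [← heq] at h1
      exact absurd (h2.trans h1) (not_lt.mpr this)
  · subst hxy; rw [← heq] at h1; exact lt_irrefl _ h1
  · rcases h.ord y hy x hx hxy d (by omega) with h2 | h2
    · rw [h2, heq] at h1; exact lt_irrefl _ h1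
    · have := h.le_self hy he
      rw [heq] at h2
      exact absurd h2 (not_lt.mpr this)

theorem dep_eq (h : PathForest q χ S L P) {x y : Fin M} (hx : x ∈ L) (hy : y ∈ L) {d e : ℕ}
    (hd : d ≤ q) (he : e ≤ q) (heq : P x d = P y e) : d = e := by
  rcases lt_trichotomy d e with h1 | h1 | h1
  · exact absurd heq (h.not_lt_dep hx hy he h1)
  · exact h1
  · exact absurd heq.symm (h.not_lt_dep hy hx hd h1)

theorem anc_eq (h : PathForest q χ S L P) {x y : Fin M} (hx : x ∈ L) (hy : y ∈ L) {d e : ℕ}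
    (hd : d ≤ q) (hed : e ≤ d) (heq : P x d = P y d) : P x e = P y e := by
  rcases hed.lt_or_eq with hed | rfl
  swap
  · exact heq
  have key : ∀ x ∈ L, ∀ y ∈ L, P x d = P y d → x < y → P x e = P y e := by
    intro x hx y hy heq hxy
    rcases h.ord x hx y hy hxy e (by omega) with h2 | h2
    · exact h2
    · have h3 := h.lt' hy hed hd
      rw [← heq] at h3
      exact absurd (h2.trans h3) (not_lt.mpr (h.le_self hx hd))
  rcases lt_trichotomy x y with hxy | hxy | hxy
  · exact key x hx y hy heq hxy
  · rw [hxy]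
  · exact (key y hy x hx heq.symm hxy).symm

theorem toChi (h : PathForest q χ S L P) (χ' : Fin q → Fin M → Fin n)
    (hχ : ∀ d : Fin q, χ' d = χ d) :
    ∃ F : ChiForest M n q χ',
      L.card ≤ (F.verts.filter fun v => ∀ u ∈ F.verts, F.par u ≠ some v).card := by
  classical
  let verts : Finset (Fin M) :=
    Finset.univ.filter fun v => ∃ x ∈ L, ∃ d ≤ q, P x d = v
  have hv : ∀ v, v ∈ verts ↔ ∃ x ∈ L, ∃ d ≤ q, P x d = v := by
    intro v; simp [verts]
  have hch : ∀ v, ∃ p : Fin M × ℕ, v ∈ verts → p.1 ∈ L ∧ p.2 ≤ q ∧ P p.1 p.2 = v := by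
    intro v
    by_cases hm : v ∈ verts
    · obtain ⟨x, hx, d, hd, e⟩ := (hv v).1 hm
      exact ⟨(x, d), fun _ => ⟨hx, hd, e⟩⟩
    · exact ⟨(v, 0), fun h => absurd h hm⟩
  choose c hc using hch
  let dep : Fin M → ℕ := fun v => (c v).2
  let par : Fin M → Option (Fin M) := fun v =>
    if (c v).2 = 0 then none else some (P (c v).1 ((c v).2 - 1))
  have hmem : ∀ x ∈ L, ∀ d ≤ q, P x d ∈ verts := fun x hx d hd =>
    (hv _).2 ⟨x, hx, d, hd, rfl⟩
  have hdep : ∀ x ∈ L, ∀ d ≤ q, dep (P x d) = d := by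
    intro x hx d hd
    obtain ⟨h1, h2, h3⟩ := hc _ (hmem x hx d hd)
    exact h.dep_eq h1 hx h2 hd h3
  have hpar0 : ∀ x ∈ L, par (P x 0) = none := by
    intro x hx
    have := hdep x hx 0 (by omega)
    simp only [dep] at this
    simp [par, this]
  have hpar1 : ∀ x ∈ L, ∀ d < q, par (P x (d + 1)) = some (P x d) := by
    intro x hx d hd
    have h0 := hdep x hx (d + 1) (by omega)
    obtain ⟨h1, h2, h3⟩ := hc _ (hmem x hx (d + 1) (by omega))
    simp only [dep] at h0
    simp only [par, h0]
    rw [h0] at h3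
    simp only [Nat.add_one_ne_zero, if_false, Nat.add_sub_cancel, Option.some.injEq]
    exact h.anc_eq h1 hx (by omega) (by omega) h3
  -- every edge is a path step
  have hpar : ∀ x ∈ L, ∀ d ≤ q, ∀ u, par (P x d) = some u → ∃ e, d = e + 1 ∧ u = P x e := by
    intro x hx d hd u hu
    cases d with
    | zero => rw [hpar0 x hx] at hu; cases hu
    | succ e =>
      rw [hpar1 x hx e (by omega)] at hu
      exact ⟨e, rfl, (Option.some.inj hu).symm⟩
  have htrans : ∀ u v, Relation.TransGen (fun a b : Fin M => par a = some b) u v →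
      ∀ x ∈ L, ∀ d ≤ q, P x d = u → ∃ e < d, v = P x e := by
    intro u v huv
    induction huv using Relation.TransGen.head_induction_on with
    | single hab =>
      intro x hx d hd he
      subst he
      obtain ⟨e, he, hu⟩ := hpar x hx d hd _ hab
      exact ⟨e, by omega, hu⟩
    | head hab _ ih =>
      intro x hx d hd he
      subst he
      obtain ⟨e, he, hu⟩ := hpar x hx d hd _ hab
      obtain ⟨e', he', hv'⟩ := ih x hx e (by omega) hu.symm
      exact ⟨e', by omega, hv'⟩
  refine ⟨{ verts := verts, par := par, dep := dep, par_mem := ?_, root_iff := ?_,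
            dep_par := ?_, depth_le := ?_, balanced := ?_, desc_gt := ?_, well_ordered := ?_,
            chi_mono := ?_ }, ?_⟩
  · intro v hvv u hu
    obtain ⟨x, hx, d, hd, rfl⟩ := (hv v).1 hvv
    obtain ⟨e, he, rfl⟩ := hpar x hx d hd u hu
    exact hmem x hx e (by omega)
  · intro v hvv
    obtain ⟨x, hx, d, hd, rfl⟩ := (hv v).1 hvv
    rw [hdep x hx d hd]
    cases d with
    | zero => simp [hpar0 x hx]
    | succ e => simp [hpar1 x hx e (by omega)]
  · intro v hvv u hu
    obtain ⟨x, hx, d, hd, rfl⟩ := (hv v).1 hvv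
    obtain ⟨e, he, rfl⟩ := hpar x hx d hd u hu
    rw [hdep x hx d hd, hdep x hx e (by omega), he]
  · intro v hvv
    exact (hc v hvv).2.1
  · intro v hvv hl
    obtain ⟨x, hx, d, hd, rfl⟩ := (hv v).1 hvv
    rw [hdep x hx d hd]
    by_contra hne
    exact hl _ (hmem x hx (d + 1) (by omega)) (hpar1 x hx d (by omega))
  · intro u huu v hvv huv
    obtain ⟨x, hx, d, hd, rfl⟩ := (hv u).1 huu
    obtain ⟨e, he, rfl⟩ := htrans _ _ huv x hx d hd rfl
    exact h.lt' hx he hd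
  · intro y hyy y' hyy' hdd hlt u huu huy
    obtain ⟨x, hx, d, hd, rfl⟩ := (hv u).1 huu
    obtain ⟨e, he, rfl⟩ := htrans _ _ huy x hx d hd rfl
    obtain ⟨x', hx', d', hd', rfl⟩ := (hv y').1 hyy'
    rw [hdep x hx e (by omega), hdep x' hx' d' hd'] at hdd
    subst hdd
    have h1 := h.le_self hx hd
    rcases lt_trichotomy x x' with hxx | hxx | hxx
    · rcases h.ord x hx x' hx' hxx e hd' with h2 | h2
      · exact absurd hlt (by rw [h2]; exact lt_irrefl _)
      · exact lt_of_le_of_lt h1 h2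
    · subst hxx; exact absurd hlt (lt_irrefl _)
    · rcases h.ord x' hx' x hx hxx e hd' with h2 | h2
      · exact absurd hlt (by rw [h2]; exact lt_irrefl _)
      · exact absurd (h2.trans hlt) (not_lt.mpr (h.le_self hx' hd'))
  · intro a haa a' haa' hp d hd
    obtain ⟨x, hx, e, he, rfl⟩ := (hv a').1 haa'
    obtain ⟨e', rfl, rfl⟩ := hpar x hx e he _ hp
    rw [hdep x hx e' (by omega)] at hd
    rw [hχ d, hd]
    exact h.chi x hx e' (by omega)
  · apply Finset.card_le_card
    intro x hx
    have hxl := h.last x hx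
    rw [Finset.mem_filter]
    refine ⟨hxl ▸ hmem x hx q le_rfl, ?_⟩
    intro u huu hu
    obtain ⟨y, hy, d, hd, rfl⟩ := (hv u).1 huu
    obtain ⟨e, he, hxe⟩ := hpar y hy d hd x hu
    have := h.dep_eq hx hy le_rfl (by omega) (hxl.trans hxe)
    omega

/-- Adding a layer of roots on top. -/
theorem addTop (h : PathForest q (fun d => χ (d + 1)) S L P) (S' L' : Finset (Fin M))
    (hS : S ⊆ S') (hL : L' ⊆ L) (s : Fin M → Fin M) (hs : ∀ r ∈ S, s r ∈ S' ∧ s r < r)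
    (hχ : ∀ r ∈ S, χ 0 r ≤ χ 0 (s r))
    (hord : ∀ x ∈ L', ∀ y ∈ L', x < y → s (P x 0) = s (P y 0) ∨ x < s (P y 0)) :
    PathForest (q + 1) χ S' L'
      (fun x d => match d with | 0 => s (P x 0) | d + 1 => P x d) := by
  constructor
  · intro x hx d hd
    cases d with
    | zero => exact (hs _ (h.mem x (hL hx) 0 (by omega))).1
    | succ d => exact hS (h.mem x (hL hx) d (by omega))
  · intro x hx
    exact h.last x (hL hx)
  · intro x hx d hd
    cases d with
    | zero => exact (hs _ (h.mem x (hL hx) 0 (by omega))).2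
    | succ d => exact h.lt x (hL hx) d (by omega)
  · intro x hx d hd
    cases d with
    | zero => exact hχ _ (h.mem x (hL hx) 0 (by omega))
    | succ d => exact h.chi x (hL hx) d (by omega)
  · intro x hx y hy hxy d hd
    cases d with
    | zero => exact hord x hx y hy hxy
    | succ d => exact h.ord x (hL hx) y (hL hy) hxy d (by omega)

end PathForest

/-- The "current record" function. -/
theorem exists_record {M n : ℕ} (c : Fin M → Fin n) (S : Finset (Fin M)) :
    ∃ s : Fin M → Fin M, (∀ r ∈ S, s r ∈ S ∧ s r ≤ r ∧ c r ≤ c (s r)) ∧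
      (∀ r ∈ S, ∀ r' ∈ S, r ≤ r' → s r = s r' ∨ (s r < s r' ∧ r < s r')) ∧
      S.card ≤ (S.filter fun r => s r ≠ r).card + n := by
  classical
  have hex : ∀ r, ∃ y, r ∈ S → (y ∈ S ∧ y ≤ r ∧ (∀ z ∈ S, z ≤ r → c z ≤ c y)) ∧
      ∀ y', (y' ∈ S ∧ y' ≤ r ∧ (∀ z ∈ S, z ≤ r → c z ≤ c y')) → y ≤ y' := by
    intro r
    by_cases hr : r ∈ S
    swap
    · exact ⟨r, fun h => absurd h hr⟩
    let T := S.filter fun y => y ≤ r ∧ (∀ z ∈ S, z ≤ r → c z ≤ c y)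
    have hT : T.Nonempty := by
      obtain ⟨y, hy, hmax⟩ := Finset.exists_max_image (S.filter (· ≤ r)) c
        ⟨r, by simp [hr]⟩
      rw [Finset.mem_filter] at hy
      refine ⟨y, ?_⟩
      simp only [T, Finset.mem_filter]
      exact ⟨hy.1, hy.2, fun z hz hzr => hmax z (by simp [hz, hzr])⟩
    refine ⟨T.min' hT, fun _ => ⟨?_, ?_⟩⟩
    · have := T.min'_mem hT
      simpa only [T, Finset.mem_filter] using this
    · intro y' hy'
      apply Finset.min'_le
      simpa only [T, Finset.mem_filter] using hy'
  choose s hs using hex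
  have hmono : ∀ r ∈ S, ∀ r' ∈ S, r ≤ r' → s r ≤ s r' := by
    intro r hr r' hr' hle
    by_contra hlt
    rw [not_le] at hlt
    obtain ⟨⟨a1, a2, a3⟩, a4⟩ := hs r hr
    obtain ⟨⟨b1, b2, b3⟩, b4⟩ := hs r' hr'
    exact absurd (a4 _ ⟨b1, hlt.le.trans a2, fun z hz hzr => b3 z hz (hzr.trans hle)⟩)
      (not_le.mpr hlt)
  have hidem : ∀ r ∈ S, s (s r) = s r := by
    intro r hr
    obtain ⟨⟨a1, a2, a3⟩, a4⟩ := hs r hr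
    obtain ⟨⟨b1, b2, b3⟩, b4⟩ := hs (s r) a1
    exact le_antisymm b2
      (a4 _ ⟨b1, b2.trans a2, fun z hz hzr => (a3 z hz hzr).trans (b3 _ a1 le_rfl)⟩)
  refine ⟨s, ?_, ?_, ?_⟩
  · intro r hr
    obtain ⟨⟨a1, a2, a3⟩, a4⟩ := hs r hr
    exact ⟨a1, a2, a3 r hr le_rfl⟩
  · intro r hr r' hr' hle
    rcases (hmono r hr r' hr' hle).eq_or_lt with h1 | h1
    · exact Or.inl h1
    · refine Or.inr ⟨h1, ?_⟩
      by_contra hcon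
      rw [not_lt] at hcon
      have := hmono _ (hs r' hr').1.1 r hr hcon
      rw [hidem r' hr'] at this
      exact absurd h1 (not_lt.mpr this)
  · have hfix : (S.filter fun r => s r = r).card ≤ n := by
      have key : ∀ y ∈ S, ∀ y' ∈ S, s y' = y' → c y = c y' → ¬ y < y' := by
        intro y hy y' hy' hf hc hlt
        obtain ⟨⟨b1, b2, b3⟩, b4⟩ := hs y' hy'
        rw [hf] at b3 b4
        exact absurd (b4 y ⟨hy, hlt.le, fun z hz hzr => (b3 z hz hzr).trans hc.ge⟩)
          (not_le.mpr hlt)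
      have := Finset.card_le_card_of_injOn (s := S.filter fun r => s r = r)
        (t := (Finset.univ : Finset (Fin n))) c (by intro x _; simp) (by
          intro y hy y' hy' hc
          simp only [Finset.coe_filter, Set.mem_ofPred_eq] at hy hy'
          exact le_antisymm (not_lt.mp (key y' hy'.1 y hy.1 hy.2 hc.symm))
            (not_lt.mp (key y hy.1 y' hy'.1 hy'.2 hc)))
      simpa using this
    have := Finset.card_filter_add_card_filter_not (s := S) (fun r => s r = r)
    simp only [ne_eq]
    omega

/-- Two elements of the same rank parity have an element strictly between. -/
theorem exists_between_of_parity {M : ℕ} (G : Finset (Fin M)) {a b : Fin M} (ha : a ∈ G)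
    (hab : a < b)
    (hp : (G.filter (· < a)).card % 2 = (G.filter (· < b)).card % 2) :
    ∃ z ∈ G, a < z ∧ z < b := by
  classical
  by_contra hcon
  push Not at hcon
  have : G.filter (· < b) = insert a (G.filter (· < a)) := by
    ext z
    simp only [Finset.mem_filter, Finset.mem_insert]
    constructor
    · rintro ⟨hz, hzb⟩
      rcases lt_trichotomy z a with h | h | h
      · exact Or.inr ⟨hz, h⟩
      · exact Or.inl h
      · exact absurd hzb (not_lt.mpr (hcon z hz h))
    · rintro (rfl | ⟨hz, hza⟩)
      · exact ⟨ha, hab⟩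
      · exact ⟨hz, hza.trans hab⟩
  rw [this, Finset.card_insert_of_notMem (by simp)] at hp
  omega

theorem exists_pathForest {M n : ℕ} (q : ℕ) : ∀ (χ : ℕ → Fin M → Fin n) (S : Finset (Fin M)),
    ∃ L P, PathForest (q + 1) χ S L P ∧ S.card ≤ 2 ^ q * (L.card + n) := by
  classical
  induction q with
  | zero =>
    intro χ S
    obtain ⟨s, h1, h2, h3⟩ := exists_record (χ 0) S
    have h0 : PathForest 0 (fun d => χ (d + 1)) (S.filter fun r => s r ≠ r)
        (S.filter fun r => s r ≠ r) (fun x _ => x) := by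
      constructor
      · intro x hx d _; exact hx
      · intro x _; rfl
      · intro x _ d hd; omega
      · intro x _ d hd; omega
      · intro x _ y _ hxy d _; exact Or.inr hxy
    refine ⟨_, _, h0.addTop S _ (Finset.filter_subset _ _) subset_rfl s ?_ ?_ ?_, by simpa using h3⟩
    · intro r hr
      rw [Finset.mem_filter] at hr
      exact ⟨(h1 r hr.1).1, lt_of_le_of_ne (h1 r hr.1).2.1 hr.2⟩
    · intro r hr
      rw [Finset.mem_filter] at hr
      exact (h1 r hr.1).2.2
    · intro x hx y hy hxy
      rw [Finset.mem_filter] at hx hy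
      rcases h2 x hx.1 y hy.1 hxy.le with h | h
      · exact Or.inl h
      · exact Or.inr h.2
  | succ q ih =>
    intro χ S
    obtain ⟨s, h1, h2, h3⟩ := exists_record (χ 0) S
    obtain ⟨L, P, h0, hcard⟩ := ih (fun d => χ (d + 1)) (S.filter fun r => s r ≠ r)
    have hroot : ∀ x ∈ L, P x 0 ∈ S := fun x hx =>
      (Finset.mem_filter.1 (h0.mem x hx 0 (by omega))).1
    have hmono : ∀ x ∈ L, ∀ y ∈ L, x ≤ y → P x 0 ≤ P y 0 := by
      intro x hx y hy hxy
      rcases hxy.eq_or_lt with rfl | hxy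
      · exact le_rfl
      rcases h0.ord x hx y hy hxy 0 (by omega) with h | h
      · exact h.le
      · exact (h0.le_self hx (by omega)).trans h.le
    have hg : ∀ x ∈ L, ∀ y ∈ L, x ≤ y → s (P x 0) ≤ s (P y 0) := by
      intro x hx y hy hxy
      rcases h2 _ (hroot x hx) _ (hroot y hy) (hmono x hx y hy hxy) with h | h
      · exact h.le
      · exact h.1.le
    let G := L.image fun x => s (P x 0)
    let rk : Fin M → ℕ := fun x => (G.filter (· < s (P x 0))).card % 2
    have hgood : ∀ L' : Finset (Fin M), L' ⊆ L → (∀ x ∈ L', ∀ y ∈ L', rk x = rk y) →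
        ∃ P', PathForest (q + 1 + 1) χ S L' P' := by
      intro L' hL' hrk
      refine ⟨_, h0.addTop S L' (Finset.filter_subset _ _) hL' s ?_ ?_ ?_⟩
      · intro r hr
        rw [Finset.mem_filter] at hr
        exact ⟨(h1 r hr.1).1, lt_of_le_of_ne (h1 r hr.1).2.1 hr.2⟩
      · intro r hr
        rw [Finset.mem_filter] at hr
        exact (h1 r hr.1).2.2
      · intro x hx y hy hxy
        have hxL := hL' hx
        have hyL := hL' hy
        rcases (hg x hxL y hyL hxy.le).eq_or_lt with h | h
        · exact Or.inl h
        right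
        obtain ⟨w, hw, hxw, hwy⟩ := exists_between_of_parity G
          (Finset.mem_image.2 ⟨x, hxL, rfl⟩) h (hrk x hx y hy)
        obtain ⟨z, hz, rfl⟩ := Finset.mem_image.1 hw
        have hxz : x < z := by
          by_contra hcon
          exact absurd (hg z hz x hxL (not_lt.mp hcon)) (not_le.mpr hxw)
        have hzy : z < y := by
          by_contra hcon
          exact absurd (hg y hyL z hz (not_lt.mp hcon)) (not_le.mpr hwy)
        have hx1 : x < P z 0 := by
          rcases h0.ord x hxL z hz hxz 0 (by omega) with h' | h'
          · rw [h'] at hxw; exact absurd hxw (lt_irrefl _)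
          · exact h'
        rcases h2 _ (hroot z hz) _ (hroot y hyL) (hmono z hz y hyL hzy.le) with h' | h'
        · rw [h'] at hwy; exact absurd hwy (lt_irrefl _)
        · exact hx1.trans h'.2
    have hhalf : ∃ L' ⊆ L, (∀ x ∈ L', ∀ y ∈ L', rk x = rk y) ∧ L.card ≤ 2 * L'.card := by
      have hsum := Finset.card_filter_add_card_filter_not (s := L) (fun x => rk x = 0)
      by_cases hc : L.card ≤ 2 * (L.filter fun x => rk x = 0).card
      · refine ⟨_, Finset.filter_subset _ _, ?_, hc⟩
        intro x hx y hy
        rw [(Finset.mem_filter.1 hx).2, (Finset.mem_filter.1 hy).2]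
      · refine ⟨L.filter fun x => ¬ rk x = 0, Finset.filter_subset _ _, ?_, by omega⟩
        intro x hx y hy
        have hx' := (Finset.mem_filter.1 hx).2
        have hy' := (Finset.mem_filter.1 hy).2
        simp only [rk] at hx' hy' ⊢
        omega
    obtain ⟨L', hL', hrk, hc⟩ := hhalf
    obtain ⟨P', hP'⟩ := hgood L' hL' hrk
    refine ⟨L', P', hP', ?_⟩
    have hpow : 1 ≤ 2 ^ q := Nat.one_le_two_pow
    calc S.card ≤ 2 ^ q * (L.card + n) + n := by omega
      _ ≤ 2 ^ q * (2 * L'.card + n) + 2 ^ q * n := by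
          gcongr
          nlinarith
      _ = 2 ^ (q + 1) * (L'.card + n) := by ring

theorem stmt15 (q M n : ℕ) (hq : 1 ≤ q) (hM : 1 ≤ M) (hn : 1 ≤ n)
    (χ : Fin q → Fin M → Fin n) :
    ∃ F : ChiForest M n q χ,
      (M : ℝ) / 2 ^ (q - 1) - n ≤
        ((F.verts.filter fun v => ∀ u ∈ F.verts, F.par u ≠ some v).card : ℝ) := by
  obtain ⟨k, rfl⟩ : ∃ k, q = k + 1 := ⟨q - 1, by omega⟩
  obtain ⟨L, P, h, hc⟩ := exists_pathForest (M := M) (n := n) k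
    (fun d v => if hd : d < k + 1 then χ ⟨d, hd⟩ v else ⟨0, hn⟩) Finset.univ
  obtain ⟨F, hF⟩ := h.toChi χ (by intro d; funext v; simp only [d.isLt, dite_true])
  refine ⟨F, ?_⟩
  rw [Finset.card_univ, Fintype.card_fin] at hc
  have hc' : M ≤ 2 ^ k * ((F.verts.filter fun v => ∀ u ∈ F.verts, F.par u ≠ some v).card + n) :=
    hc.trans (by gcongr)
  rw [Nat.add_sub_cancel, sub_le_iff_le_add, div_le_iff₀ (by positivity), mul_comm]
  exact_mod_cast hc'
end

section
/- Let s ≥ 1 and n ≥ t ≥ 1, and consider a red/blue edge-coloring of the complete graph on {1,…,N}. Suppose there exists an s-red-net (F, (X_v)_{v∈V(F)}) of order r, where r ≥ 3·(4s^2)^t and |V(F)| ≥ 3sn/r. Then the coloring contains a red clique of size s+1 or a blue ordered copy of P_n^t. -/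
/-- `χ i j` is the color of the edge `{i, j}` for `i < j`: `true` = red, `false` = blue.
An `s`-red-net of order `r` (for the parameter `t`): a pair `(F, (X_v)_{v ∈ V(F)})`
where `F` is a balanced well-ordered rooted forest of depth `s − 1` with vertex set a
finite set of naturals (encoded by `verts`, a parent map `par`, and a depth function
`dep`), and each `X_v` is a blue clique of size `r` in `K_N`, such that
(1) `v < u` in `V(F)` implies every element of `X_v` is smaller than every element of
`X_u`, and (2) for every vertex `v` and every descendant `u` of `v` there is no blue
`K_{t,t}` with one part in `X_v` and the other in `X_u`. -/
structure RedNet (N : ℕ) (χ : Fin N → Fin N → Bool) (s r t : ℕ) where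
  verts : Finset ℕ
  par : ℕ → Option ℕ
  dep : ℕ → ℕ
  X : ℕ → Finset (Fin N)
  /-- parents of vertices are vertices -/
  par_mem : ∀ v ∈ verts, ∀ u : ℕ, par v = some u → u ∈ verts
  /-- the roots are exactly the vertices of depth `0` -/
  root_iff : ∀ v ∈ verts, (par v = none ↔ dep v = 0)
  /-- depth increases by one along edges -/
  dep_par : ∀ v ∈ verts, ∀ u : ℕ, par v = some u → dep v = dep u + 1
  /-- the forest has depth `s − 1` -/
  depth_le : ∀ v ∈ verts, dep v ≤ s - 1
  /-- balanced: every leaf (vertex with no children) is at depth `s − 1` -/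
  balanced : ∀ v ∈ verts, (∀ u ∈ verts, par u ≠ some v) → dep v = s - 1
  /-- well-ordered, part 1: every vertex comes before all of its descendants -/
  desc_gt : ∀ u ∈ verts, ∀ v ∈ verts,
    Relation.TransGen (fun a b : ℕ => par a = some b) u v → v < u
  /-- well-ordered, part 2: for vertices `y < y'` of the same depth, all descendants
  of `y` come before `y'` -/
  well_ordered : ∀ y ∈ verts, ∀ y' ∈ verts, dep y = dep y' → y < y' →
    ∀ u ∈ verts, Relation.TransGen (fun a b : ℕ => par a = some b) u y → u < y'
  /-- each `X_v` has `r` vertices -/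
  X_card : ∀ v ∈ verts, (X v).card = r
  /-- each `X_v` is a blue clique -/
  X_blue : ∀ v ∈ verts, ∀ a ∈ X v, ∀ b ∈ X v, a < b → χ a b = false
  /-- `v < u` implies `X_v < X_u` elementwise -/
  X_ordered : ∀ v ∈ verts, ∀ u ∈ verts, v < u → ∀ a ∈ X v, ∀ b ∈ X u, a < b
  /-- no blue `K_{t,t}` between `X_v` and `X_u` for `u` a descendant of `v` -/
  no_blue_Ktt : ∀ v ∈ verts, ∀ u ∈ verts,
    Relation.TransGen (fun a b : ℕ => par a = some b) u v →
    ¬ ∃ (A B : Finset (Fin N)), A ⊆ X v ∧ B ⊆ X u ∧ A.card = t ∧ B.card = t ∧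
        ∀ a ∈ A, ∀ b ∈ B, χ a b = false


open Finset in
lemma rn_count {ι α : Type*} [Fintype ι] [DecidableEq ι] [DecidableEq α] (Y : ι → Finset α) (q : ℕ)
    (hY : ∀ i, (Y i).card = q) (i j : ι) (hij : i ≠ j) (E : Finset (α × α)) :
    ((Fintype.piFinset Y).filter (fun f => (f i, f j) ∈ E)).card * q ^ 2
      ≤ E.card * q ^ (Fintype.card ι) := by
  have h1 : ((Fintype.piFinset Y).filter (fun f => (f i, f j) ∈ E)).card ≤
      (E ×ˢ Fintype.piFinset (fun x : {x : ι // x ≠ i ∧ x ≠ j} => Y x)).card := by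
    apply Finset.card_le_card_of_injOn (fun f => ((f i, f j), fun x => f x))
    · intro f hf
      simp only [coe_filter, Fintype.mem_piFinset, Set.mem_ofPred_eq] at hf
      simp only [coe_product, Set.mem_prod, mem_coe, Fintype.mem_piFinset]
      exact ⟨hf.2, fun x => hf.1 x⟩
    · intro f _ g _ h
      simp only [Prod.mk.injEq] at h
      funext x
      by_cases hx : x = i
      · rw [hx]; exact h.1.1
      by_cases hx' : x = j
      · rw [hx']; exact h.1.2
      exact congrFun h.2 ⟨x, hx, hx'⟩
  have h2 : Fintype.card {x : ι // x ≠ i ∧ x ≠ j} + 2 = Fintype.card ι := by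
    rw [Fintype.card_subtype]
    have : (univ.filter (fun x : ι => x ≠ i ∧ x ≠ j)) = univ \ {i, j} := by
      ext x; simp
    rw [this, card_sdiff_of_subset (subset_univ _), card_pair hij, card_univ]
    have : ({i, j} : Finset ι).card ≤ (univ : Finset ι).card := card_le_card (subset_univ _)
    rw [card_pair hij, card_univ] at this
    omega
  rw [card_product, Fintype.card_piFinset] at h1
  simp only [hY, prod_const, card_univ] at h1
  calc _ ≤ (E.card * q ^ Fintype.card {x : ι // x ≠ i ∧ x ≠ j}) * q ^ 2 := Nat.mul_le_mul_right _ h1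
    _ = _ := by rw [mul_assoc, ← pow_add, h2]

lemma rn_aux (t : ℕ) (ht : 1 ≤ t) : (t - 1) + t * t < 4 ^ t := by
  obtain ⟨k, rfl⟩ : ∃ k, t = k + 1 := ⟨t - 1, by omega⟩
  clear ht
  induction k with
  | zero => norm_num
  | succ k ih =>
    rw [pow_succ]
    simp only [Nat.add_sub_cancel] at ih ⊢
    nlinarith

open Finset in
lemma rn_kst {α : Type*} [DecidableEq α] (Y Z : Finset α) (q s t : ℕ) (hs : 1 ≤ s) (ht : 1 ≤ t)
    (hY : Y.card = q) (hZ : Z.card = q) (hq : (4 * s ^ 2) ^ t ≤ q) (c : α → α → Bool)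
    (hno : ¬ ∃ A B : Finset α, A ⊆ Y ∧ B ⊆ Z ∧ A.card = t ∧ B.card = t ∧
      ∀ a ∈ A, ∀ b ∈ B, c a b = false) :
    ((Y ×ˢ Z).filter (fun p => c p.1 p.2 = false)).card * s ^ 2 < q ^ 2 := by
  by_contra hcon
  push Not at hcon
  have hqpos : 0 < q := lt_of_lt_of_le (by positivity) hq
  set e := ((Y ×ˢ Z).filter (fun p => c p.1 p.2 = false)).card with he
  have he' : e = ∑ b ∈ Z, (Y.filter (fun a => c a b = false)).card := by
    rw [he, card_filter, sum_product_right]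
    simp only [card_filter]
  obtain ⟨k, rfl⟩ : ∃ k, t = k + 1 := ⟨t - 1, by omega⟩
  have hpm : e ^ (k + 1) ≤ q ^ k * ∑ b ∈ Z, (Y.filter (fun a => c a b = false)).card ^ (k + 1) := by
    rw [he', ← hZ]
    exact pow_sum_le_card_mul_sum_pow (fun _ _ => Nat.zero_le _) k
  have hdc : ∑ b ∈ Z, (Y.filter (fun a => c a b = false)).card ^ (k + 1) =
      ∑ f ∈ Fintype.piFinset (fun _ : Fin (k+1) => Y), (Z.filter (fun b => ∀ i, c (f i) b = false)).card := by
    rw [sum_congr rfl (fun (f : Fin (k+1) → α) _ => card_filter (fun b => ∀ i, c (f i) b = false) Z)]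
    rw [sum_comm]
    apply sum_congr rfl
    intro b _
    rw [← card_filter]
    have : (Fintype.piFinset (fun _ : Fin (k+1) => Y)).filter (fun f => ∀ i, c (f i) b = false) =
      Fintype.piFinset (fun _ : Fin (k+1) => Y.filter (fun a => c a b = false)) := by
      ext f; simp [forall_and]
    rw [this, Fintype.card_piFinset_const]
  set G := Fintype.piFinset (fun _ : Fin (k+1) => Y) with hG
  have hGc : G.card = q ^ (k+1) := by rw [hG, Fintype.card_piFinset_const, hY]
  -- non-injective count
  have hni : (G.filter (fun f => ¬ Function.Injective f)).card * q ≤ ((k+1)*(k+1)) * q ^ (k+1) := by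
    have hsub : G.filter (fun f => ¬ Function.Injective f) ⊆
        ((univ : Finset (Fin (k+1) × Fin (k+1))).filter (fun p => p.1 ≠ p.2)).biUnion
          (fun p => G.filter (fun f => (f p.1, f p.2) ∈ Y.image (fun y => (y, y)))) := by
      intro f hf
      obtain ⟨hf1, hf2⟩ := mem_filter.1 hf
      unfold Function.Injective at hf2
      push Not at hf2
      obtain ⟨a, b, hab, hne⟩ := hf2
      simp only [mem_biUnion, mem_filter, mem_univ, true_and, mem_image]
      refine ⟨(a, b), hne, hf1, f a, ?_, ?_⟩
      · exact Fintype.mem_piFinset.1 hf1 a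
      · simp [hab]
    have h1 := (card_le_card hsub).trans card_biUnion_le
    have h2 : ∀ p ∈ (univ : Finset (Fin (k+1) × Fin (k+1))).filter (fun p => p.1 ≠ p.2),
        (G.filter (fun f => (f p.1, f p.2) ∈ Y.image (fun y => (y, y)))).card * q ≤ q ^ (k+1) := by
      intro p hp
      have h3 := rn_count (fun _ : Fin (k+1) => Y) q (fun _ => hY) p.1 p.2 (mem_filter.1 hp).2
        (Y.image (fun y => (y, y)))
      rw [Fintype.card_fin] at h3
      have h4 : (Y.image (fun y => (y, y))).card ≤ q := hY ▸ card_image_le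
      have h5 := h3.trans (Nat.mul_le_mul_right _ h4)
      rw [pow_two, ← mul_assoc, mul_comm q (q ^ (k+1))] at h5
      exact Nat.le_of_mul_le_mul_right h5 hqpos
    calc _ ≤ (∑ p ∈ (univ : Finset (Fin (k+1) × Fin (k+1))).filter (fun p => p.1 ≠ p.2),
          (G.filter (fun f => (f p.1, f p.2) ∈ Y.image (fun y => (y, y)))).card) * q :=
            Nat.mul_le_mul_right _ h1
      _ ≤ ∑ p ∈ (univ : Finset (Fin (k+1) × Fin (k+1))).filter (fun p => p.1 ≠ p.2), q ^ (k+1) := by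
          rw [sum_mul]; exact sum_le_sum h2
      _ = ((univ : Finset (Fin (k+1) × Fin (k+1))).filter (fun p => p.1 ≠ p.2)).card * q ^ (k+1) := by
          rw [sum_const, smul_eq_mul]
      _ ≤ _ := by
          apply Nat.mul_le_mul_right
          refine (card_le_univ _).trans ?_
          simp
  have hinj : ∀ f ∈ G.filter (fun f => Function.Injective f),
      (Z.filter (fun b => ∀ i, c (f i) b = false)).card ≤ k := by
    intro f hf
    by_contra hlt
    push Not at hlt
    obtain ⟨B, hB, hBc⟩ := exists_subset_card_eq (show k + 1 ≤ _ from hlt)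
    obtain ⟨hfG, hfi⟩ := mem_filter.1 hf
    apply hno
    refine ⟨univ.image f, B, ?_, hB.trans (filter_subset _ _), ?_, hBc, ?_⟩
    · intro x hx
      obtain ⟨i, _, rfl⟩ := mem_image.1 hx
      exact Fintype.mem_piFinset.1 hfG i
    · rw [card_image_of_injective _ hfi]; simp
    · intro a ha b hb
      obtain ⟨i, _, rfl⟩ := mem_image.1 ha
      exact (mem_filter.1 (hB hb)).2 i
  have htot : ∑ f ∈ G, (Z.filter (fun b => ∀ i, c (f i) b = false)).card ≤
      (k + (k+1)*(k+1)) * q ^ (k+1) := by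
    rw [← sum_filter_add_sum_filter_not G (fun f => Function.Injective f), add_mul]
    apply add_le_add
    · calc _ ≤ ∑ f ∈ G.filter (fun f => Function.Injective f), k := sum_le_sum hinj
        _ = (G.filter (fun f => Function.Injective f)).card * k := by rw [sum_const, smul_eq_mul]
        _ ≤ G.card * k := Nat.mul_le_mul_right _ (card_le_card (filter_subset _ _))
        _ = _ := by rw [hGc, mul_comm]
    · refine le_trans ?_ hni
      rw [← smul_eq_mul, ← sum_const]
      apply sum_le_sum
      intro f _
      rw [← hZ]
      exact card_le_card (filter_subset _ _)
  rw [hdc] at hpm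
  have hK := rn_aux (k+1) ht
  simp only [Nat.add_sub_cancel] at hK
  set K := k + (k+1)*(k+1) with hKdef
  have h1 : (q ^ 2) ^ (k+1) ≤ (e * s ^ 2) ^ (k+1) := Nat.pow_le_pow_left hcon _
  have h2 : (e * s ^ 2) ^ (k+1) ≤ q ^ k * (K * q ^ (k+1)) * (s ^ 2) ^ (k+1) := by
    rw [mul_pow]
    exact Nat.mul_le_mul_right _ (hpm.trans (Nat.mul_le_mul_left _ htot))
  have h3 : K * (s ^ 2) ^ (k+1) < q := by
    refine lt_of_lt_of_le ?_ hq
    rw [mul_pow]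
    exact Nat.mul_lt_mul_of_pos_right hK (by positivity)
  have h4 : q ^ k * (K * q ^ (k+1)) * (s ^ 2) ^ (k+1) < (q ^ 2) ^ (k+1) := by
    calc _ = (K * (s ^ 2) ^ (k+1)) * (q ^ k * q ^ (k+1)) := by ring
      _ < q * (q ^ k * q ^ (k+1)) := Nat.mul_lt_mul_of_pos_right h3 (by positivity)
      _ = _ := by ring
  omega

open Finset in
lemma rn_red {N : ℕ} (q s t : ℕ) (hs : 1 ≤ s) (ht : 1 ≤ t) (hq : (4 * s ^ 2) ^ t ≤ q)
    (χ : Fin N → Fin N → Bool) (Y : Fin (s+1) → Finset (Fin N)) (hY : ∀ i, (Y i).card = q)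
    (hord : ∀ i j, i < j → ∀ a ∈ Y i, ∀ b ∈ Y j, a < b)
    (hno : ∀ i j, i < j → ¬ ∃ A B : Finset (Fin N), A ⊆ Y i ∧ B ⊆ Y j ∧ A.card = t ∧ B.card = t ∧
      ∀ a ∈ A, ∀ b ∈ B, χ a b = false) :
    ∃ f : Fin (s + 1) → Fin N, StrictMono f ∧
      ∀ i j : Fin (s + 1), i < j → χ (f i) (f j) = true := by
  have hqpos : 0 < q := lt_of_lt_of_le (by positivity) hq
  set Pr := (univ : Finset (Fin (s+1) × Fin (s+1))).filter (fun p => p.1 < p.2) with hPr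
  have hPrc : Pr.card ≤ s ^ 2 := by
    have : Pr.card ≤ (univ ×ˢ univ : Finset (Fin s × Fin s)).card := by
      apply card_le_card_of_injOn (fun p => if h : p.1.1 < s ∧ 1 ≤ p.2.1 then
        (⟨p.1.1, h.1⟩, ⟨p.2.1 - 1, by have := p.2.2; omega⟩) else (⟨0, hs⟩, ⟨0, hs⟩))
      · intro p _; simp
      · intro p hp p' hp' h
        have h1 : p.1 < p.2 := (mem_filter.1 hp).2
        have h2 : p'.1 < p'.2 := (mem_filter.1 hp').2
        have := p.2.2
        have := p'.2.2
        rw [Fin.lt_def] at h1 h2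
        simp only at h
        rw [dif_pos ⟨by omega, by omega⟩, dif_pos ⟨by omega, by omega⟩] at h
        simp only [Prod.mk.injEq, Fin.mk.injEq] at h
        ext <;> omega
    simpa [sq] using this
  have hPrne : Pr.Nonempty := ⟨(⟨0, by omega⟩, ⟨1, by omega⟩), by
    rw [hPr, mem_filter]; exact ⟨mem_univ _, by rw [Fin.lt_def]; exact Nat.zero_lt_one⟩⟩
  set G := Fintype.piFinset Y with hG
  have hGc : G.card = q ^ (s+1) := by rw [hG, Fintype.card_piFinset]; simp [hY]
  let E : Fin (s+1) × Fin (s+1) → Finset (Fin N × Fin N) := fun p =>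
    (Y p.1 ×ˢ Y p.2).filter (fun x => χ x.1 x.2 = false)
  have hE : ∀ p ∈ Pr, (E p).card * s ^ 2 < q ^ 2 := fun p hp =>
    rn_kst (Y p.1) (Y p.2) q s t hs ht (hY _) (hY _) hq χ (hno _ _ (mem_filter.1 hp).2)
  have hbad : (Pr.biUnion (fun p => G.filter (fun f => (f p.1, f p.2) ∈ E p))).card < G.card := by
    have hb : ∀ p ∈ Pr, (G.filter (fun f => (f p.1, f p.2) ∈ E p)).card * s ^ 2 < q ^ (s+1) := by
      intro p hp
      have h1 := rn_count Y q hY p.1 p.2 (ne_of_lt (mem_filter.1 hp).2) (E p)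
      rw [Fintype.card_fin] at h1
      have h2 := hE p hp
      have h3 : ((G.filter (fun f => (f p.1, f p.2) ∈ E p)).card * s ^ 2) * q ^ 2 < q ^ (s+1) * q ^ 2 := by
        calc _ = ((G.filter (fun f => (f p.1, f p.2) ∈ E p)).card * q ^ 2) * s ^ 2 := by ring
          _ ≤ ((E p).card * q ^ (s+1)) * s ^ 2 := Nat.mul_le_mul_right _ h1
          _ = ((E p).card * s ^ 2) * q ^ (s+1) := by ring
          _ < q ^ 2 * q ^ (s+1) := Nat.mul_lt_mul_of_pos_right h2 (by positivity)
          _ = _ := by ring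
      exact Nat.lt_of_mul_lt_mul_right h3
    have h1 : (∑ p ∈ Pr, (G.filter (fun f => (f p.1, f p.2) ∈ E p)).card) * s ^ 2 < q ^ (s+1) * s ^ 2 := by
      rw [sum_mul]
      calc _ < ∑ p ∈ Pr, q ^ (s+1) := sum_lt_sum_of_nonempty hPrne hb
        _ = Pr.card * q ^ (s+1) := by rw [sum_const, smul_eq_mul]
        _ ≤ s ^ 2 * q ^ (s+1) := Nat.mul_le_mul_right _ hPrc
        _ = _ := by ring
    rw [hGc]
    exact lt_of_le_of_lt card_biUnion_le (Nat.lt_of_mul_lt_mul_right h1)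
  obtain ⟨f, hf, hf'⟩ := exists_mem_notMem_of_card_lt_card hbad
  have hfm := Fintype.mem_piFinset.1 hf
  refine ⟨f, fun i j hij => hord i j hij _ (hfm i) _ (hfm j), fun i j hij => ?_⟩
  by_contra hc
  apply hf'
  simp only [mem_biUnion, mem_filter]
  refine ⟨(i, j), by simp [hPr, hij], hf, ?_⟩
  simp only [E, mem_filter, mem_product]
  exact ⟨⟨hfm i, hfm j⟩, by simpa using hc⟩

lemma rn_split {α : Type*} [LinearOrder α] (X : Finset α) (a b : ℕ) (h : X.card = a + b) :
    ∃ Y Z : Finset α, Y ⊆ X ∧ Z ⊆ X ∧ Y.card = a ∧ Z.card = b ∧ ∀ y ∈ Y, ∀ z ∈ Z, y < z := by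
  let f := X.orderEmbOfFin h
  refine ⟨Finset.univ.map ((Fin.castAddEmb b).trans f.toEmbedding),
    Finset.univ.map ((Fin.natAddEmb a).trans f.toEmbedding), ?_, ?_, by simp, by simp, ?_⟩
  · intro x hx
    simp only [Finset.mem_map, Finset.mem_univ, true_and] at hx
    obtain ⟨i, rfl⟩ := hx
    exact X.orderEmbOfFin_mem h _
  · intro x hx
    simp only [Finset.mem_map, Finset.mem_univ, true_and] at hx
    obtain ⟨i, rfl⟩ := hx
    exact X.orderEmbOfFin_mem h _
  · intro y hy z hz
    simp only [Finset.mem_map, Finset.mem_univ, true_and] at hy hz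
    obtain ⟨i, rfl⟩ := hy
    obtain ⟨j, rfl⟩ := hz
    apply f.strictMono
    rw [Fin.lt_def]
    simp only [Fin.castAddEmb_apply, Fin.natAddEmb_apply, Fin.val_castAdd, Fin.val_natAdd]
    omega

lemma rn_thirds {α : Type*} [LinearOrder α] (X : Finset α) (q c : ℕ) (h : X.card = q + (c + q)) :
    ∃ F M L : Finset α, F ⊆ X ∧ M ⊆ X ∧ L ⊆ X ∧ F.card = q ∧ M.card = c ∧ L.card = q ∧
      (∀ y ∈ F, ∀ z ∈ M, y < z) ∧ (∀ y ∈ M, ∀ z ∈ L, y < z) := by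
  obtain ⟨F, Z, hF, hZ, hFc, hZc, hFZ⟩ := rn_split X q (c + q) h
  obtain ⟨M, L, hM, hL, hMc, hLc, hML⟩ := rn_split Z c q hZc
  exact ⟨F, M, L, hF, hM.trans hZ, hL.trans hZ, hFc, hMc, hLc, fun y hy z hz => hFZ y hy z (hM hz), hML⟩

/-- `S` is a blue power of a path with a tail `T`. -/
def RnGT {N : ℕ} (χ : Fin N → Fin N → Bool) (t : ℕ) (S T : Finset (Fin N)) : Prop :=
  T ⊆ S ∧ t ≤ T.card ∧ (∀ a ∈ S, a ∉ T → ∀ b ∈ T, a < b) ∧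
  ∀ a ∈ S, ∀ b ∈ S, a < b → (S.filter (fun x => a < x ∧ x < b)).card < t → χ a b = false

lemma rn_base {N : ℕ} (χ : Fin N → Fin N → Bool) (t : ℕ) (S : Finset (Fin N)) (h : t ≤ S.card)
    (hS : ∀ a ∈ S, ∀ b ∈ S, a < b → χ a b = false) : RnGT χ t S S :=
  ⟨Finset.Subset.refl _, h, fun a ha hn => absurd ha hn, fun a ha b hb hab _ => hS a ha b hb hab⟩

lemma rn_ext {N : ℕ} (χ : Fin N → Fin N → Bool) (t : ℕ) (ht : 1 ≤ t) (S T D : Finset (Fin N))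
    (h : RnGT χ t S T) (hTD : ∀ a ∈ T, ∀ b ∈ D, a < b) (hb : ∀ a ∈ T, ∀ b ∈ D, χ a b = false)
    (hD : ∀ a ∈ D, ∀ b ∈ D, a < b → χ a b = false) (hc : t ≤ D.card) :
    RnGT χ t (S ∪ D) D ∧ (S ∪ D).card = S.card + D.card := by
  obtain ⟨h1, h2, h3, h4⟩ := h
  have hSD : ∀ a ∈ S, ∀ b ∈ D, a < b := by
    intro a ha b hb'
    by_cases haT : a ∈ T
    · exact hTD a haT b hb'
    · obtain ⟨x, hx⟩ : T.Nonempty := Finset.card_pos.1 (by omega)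
      exact (h3 a ha haT x hx).trans (hTD x hx b hb')
  refine ⟨⟨Finset.subset_union_right, hc, ?_, ?_⟩, ?_⟩
  · intro a ha haD b hb'
    rcases Finset.mem_union.1 ha with h | h
    · exact hSD a h b hb'
    · exact absurd h haD
  · intro a ha b hb' hab hcard
    rcases Finset.mem_union.1 ha with ha | ha <;> rcases Finset.mem_union.1 hb' with hb' | hb'
    · apply h4 a ha b hb' hab
      refine lt_of_le_of_lt (Finset.card_le_card ?_) hcard
      exact Finset.filter_subset_filter _ Finset.subset_union_left
    · by_cases haT : a ∈ T
      · exact hb a haT b hb'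
      · exfalso
        have : T ⊆ (S ∪ D).filter (fun x => a < x ∧ x < b) := by
          intro x hx
          exact Finset.mem_filter.2 ⟨Finset.mem_union_left _ (h1 hx), h3 a ha haT x hx, hTD x hx b hb'⟩
        have := Finset.card_le_card this
        omega
    · exact absurd (hSD b hb' a ha) (not_lt.2 hab.le)
    · exact hD a ha b hb' hab
  · apply Finset.card_union_of_disjoint
    rw [Finset.disjoint_left]
    intro a ha hd
    exact lt_irrefl _ (hSD a ha a hd)

lemma rn_fin {N : ℕ} (χ : Fin N → Fin N → Bool) (t n : ℕ) (S T : Finset (Fin N))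
    (h : RnGT χ t S T) (hn : n ≤ S.card) :
    ∃ f : Fin n → Fin N, StrictMono f ∧
      ∀ i j : Fin n, i < j → (j : ℕ) ≤ (i : ℕ) + t → χ (f i) (f j) = false := by
  let g := S.orderEmbOfFin rfl
  have hmono : StrictMono (fun i : Fin n => g (Fin.castLE hn i)) := by
    intro i j hij
    exact g.strictMono (by rw [Fin.lt_def] at hij ⊢; exact hij)
  refine ⟨fun i => g (Fin.castLE hn i), hmono, ?_⟩
  intro i j hij hjt
  apply h.2.2.2 _ (S.orderEmbOfFin_mem rfl _) _ (S.orderEmbOfFin_mem rfl _) (hmono hij)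
  have : S.filter (fun x => g (Fin.castLE hn i) < x ∧ x < g (Fin.castLE hn j)) ⊆
      (Finset.Ioo (Fin.castLE hn i) (Fin.castLE hn j)).map g.toEmbedding := by
    intro x hx
    obtain ⟨hxS, hx1, hx2⟩ := Finset.mem_filter.1 hx
    have : x ∈ Set.range g := by
      rw [Finset.range_orderEmbOfFin]; exact hxS
    obtain ⟨k, rfl⟩ := this
    rw [g.lt_iff_lt] at hx1 hx2
    exact Finset.mem_map.2 ⟨k, Finset.mem_Ioo.2 ⟨hx1, hx2⟩, rfl⟩
  have := Finset.card_le_card this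
  rw [Finset.card_map, Fin.card_Ioo] at this
  rw [Fin.lt_def] at hij
  simp only [Fin.val_castLE] at this
  exact lt_of_le_of_lt this (by omega)

/-- chains of a relation, with end point and length -/
inductive RnCh (V : Finset ℕ) (R : ℕ → ℕ → Prop) : ℕ → ℕ → Prop
  | one (v : ℕ) (hv : v ∈ V) : RnCh V R v 1
  | step (u v m : ℕ) (h : RnCh V R u m) (hR : R u v) : RnCh V R v (m + 1)

lemma rn_len (V : Finset ℕ) (R : ℕ → ℕ → Prop) (hR : ∀ a b, R a b → a < b ∧ a ∈ V ∧ b ∈ V) :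
    ∃ l : ℕ → ℕ, (∀ v ∈ V, 1 ≤ l v ∧ RnCh V R v (l v)) ∧ ∀ a b, R a b → l a + 1 ≤ l b := by
  classical
  have hbd : ∀ v m, RnCh V R v m → m ≤ v + 1 := by
    intro v m h
    induction h with
    | one v hv => omega
    | step u v m h hr ih => have := (hR u v hr).1; omega
  have key : ∀ v ∈ V, RnCh V R v (Nat.findGreatest (RnCh V R v) (v + 1)) := fun v hv =>
    Nat.findGreatest_spec (m := 1) (by omega) (RnCh.one v hv)
  refine ⟨fun v => Nat.findGreatest (RnCh V R v) (v + 1), fun v hv => ⟨?_, key v hv⟩, ?_⟩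
  · exact Nat.le_findGreatest (by omega) (RnCh.one v hv)
  · intro a b hab
    have h := RnCh.step _ _ _ (key a (hR a b hab).2.1) hab
    exact Nat.le_findGreatest (hbd _ _ h) h

section forest
variable {N : ℕ} {χ : Fin N → Fin N → Bool} {s r t : ℕ} (C : RedNet N χ s r t)

/-- `u` is a descendant of, or equal to, `v` -/
def RnD (u v : ℕ) : Prop := Relation.ReflTransGen (fun a b : ℕ => C.par a = some b) u v

lemma rnD_mem {u v : ℕ} (hu : u ∈ C.verts) (h : RnD C u v) : v ∈ C.verts := by
  induction h with
  | refl => exact hu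
  | tail _ h ih => exact C.par_mem _ ih _ h

lemma rnD_trans {u v : ℕ} (h : RnD C u v) :
    u = v ∨ Relation.TransGen (fun a b : ℕ => C.par a = some b) u v := by
  rcases Relation.reflTransGen_iff_eq_or_transGen.1 h with h | h
  · exact Or.inl h.symm
  · exact Or.inr h

lemma rnD_le {u v : ℕ} (hu : u ∈ C.verts) (h : RnD C u v) : v ≤ u := by
  rcases rnD_trans C h with rfl | h'
  · exact le_rfl
  · exact (C.desc_gt u hu v (rnD_mem C hu h) h').le

lemma rnD_total {u v w : ℕ} (h : RnD C u v) (h' : RnD C u w) : RnD C v w ∨ RnD C w v :=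
  Relation.ReflTransGen.total_of_right_unique
    (fun a b c hb hc => Option.some_injective _ (hb.symm.trans hc)) h h'

lemma rn_anc (k : ℕ) : ∀ v ∈ C.verts, C.dep v = k → ∀ d ≤ k, ∃ u ∈ C.verts, C.dep u = d ∧ RnD C v u := by
  induction k with
  | zero =>
    intro v hv hd d hdk
    exact ⟨v, hv, by omega, Relation.ReflTransGen.refl⟩
  | succ k ih =>
    intro v hv hd d hdk
    rcases Nat.eq_or_lt_of_le hdk with h | h
    · exact ⟨v, hv, by omega, Relation.ReflTransGen.refl⟩
    · cases hp : C.par v with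
      | none => have := (C.root_iff v hv).1 hp; omega
      | some u =>
        have := C.dep_par v hv u hp
        obtain ⟨w, hw, hwd, hD⟩ := ih u (C.par_mem v hv u hp) (by omega) d (by omega)
        exact ⟨w, hw, hwd, Relation.ReflTransGen.head hp hD⟩

lemma rn_leaf (k : ℕ) : ∀ v ∈ C.verts, C.dep v + k = s - 1 →
    ∃ w ∈ C.verts, C.dep w = s - 1 ∧ RnD C w v := by
  induction k with
  | zero => intro v hv h; exact ⟨v, hv, h, Relation.ReflTransGen.refl⟩
  | succ k ih =>
    intro v hv h
    by_cases hl : ∀ u ∈ C.verts, C.par u ≠ some v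
    · have := C.balanced v hv hl; omega
    · push Not at hl
      obtain ⟨u, hu, hp⟩ := hl
      have := C.dep_par u hu v hp
      obtain ⟨w, hw, hwd, hD⟩ := ih u hu (by omega)
      exact ⟨w, hw, hwd, Relation.ReflTransGen.tail hD hp⟩

open Classical in
/-- path to the root -/
noncomputable def rnP (v : ℕ) : Finset ℕ := C.verts.filter (fun u => RnD C v u)

lemma mem_rnP {v u : ℕ} : u ∈ rnP C v ↔ u ∈ C.verts ∧ RnD C v u := by
  simp [rnP]

lemma rnP_card (k : ℕ) : ∀ v ∈ C.verts, C.dep v = k → (rnP C v).card = k + 1 := by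
  induction k with
  | zero =>
    intro v hv hd
    have hp := (C.root_iff v hv).2 hd
    have : rnP C v = {v} := by
      ext u
      rw [mem_rnP, Finset.mem_singleton]
      constructor
      · rintro ⟨_, hD⟩
        rcases Relation.ReflTransGen.cases_head hD with h | ⟨c, h, _⟩
        · exact h.symm
        · rw [hp] at h; cases h
      · rintro rfl; exact ⟨hv, Relation.ReflTransGen.refl⟩
    rw [this]; simp
  | succ k ih =>
    intro v hv hd
    cases hp : C.par v with
    | none => have := (C.root_iff v hv).1 hp; omega
    | some u =>
      have hdu := C.dep_par v hv u hp
      have hu := C.par_mem v hv u hp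
      have huv : u < v := C.desc_gt v hv u hu (Relation.TransGen.single hp)
      have : rnP C v = insert v (rnP C u) := by
        ext w
        rw [Finset.mem_insert, mem_rnP, mem_rnP]
        constructor
        · rintro ⟨hw, hD⟩
          rcases Relation.ReflTransGen.cases_head hD with h | ⟨c, h, h'⟩
          · exact Or.inl h.symm
          · have h2 : u = c := Option.some_injective _ (hp.symm.trans h)
            subst h2
            exact Or.inr ⟨hw, h'⟩
        · rintro (rfl | ⟨hw, hD⟩)
          · exact ⟨hv, Relation.ReflTransGen.refl⟩
          · exact ⟨hw, Relation.ReflTransGen.head hp hD⟩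
      rw [this, Finset.card_insert_of_notMem, ih u hu (by omega)]
      intro h
      have := rnD_le C hu ((mem_rnP C).1 h).2
      omega

/-- incomparable vertices are ordered like the leaves below them -/
lemma rn_incomp {v w a b : ℕ} (hv : v ∈ C.verts) (hw : w ∈ C.verts) (hvw : v < w)
    (ha : RnD C v a) (hb : RnD C w b) (h1 : ¬ RnD C a b) (h2 : ¬ RnD C b a) : a < b := by
  have hav := rnD_mem C hv ha
  have hbv := rnD_mem C hw hb
  have key : ∀ y ∈ C.verts, ∀ y' ∈ C.verts, C.dep y = C.dep y' → y < y' → ∀ u ∈ C.verts,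
      RnD C u y → u < y' := by
    intro y hy y' hy' hd hlt u hu hD
    rcases rnD_trans C hD with rfl | h
    · exact hlt
    · exact C.well_ordered y hy y' hy' hd hlt u hu h
  rcases le_total (C.dep a) (C.dep b) with h | h
  · obtain ⟨b', hb', hd, hD⟩ := rn_anc C _ b hbv rfl _ h
    rcases lt_trichotomy a b' with hlt | heq | hgt
    · exact lt_of_lt_of_le hlt (rnD_le C hbv hD)
    · subst heq; exact absurd hD h2
    · have := key b' hb' a hav hd hgt w hw (hb.trans hD)
      have := rnD_le C hv ha
      omega
  · obtain ⟨a', ha', hd, hD⟩ := rn_anc C _ a hav rfl _ h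
    rcases lt_trichotomy a' b with hlt | heq | hgt
    · exact key a' ha' b hbv hd hlt a hav hD
    · subst heq; exact absurd hD h1
    · have := key b hbv a' ha' hd.symm hgt w hw hb
      have := rnD_le C hv (ha.trans hD)
      omega

end forest

lemma rn_hall {N : ℕ} {χ : Fin N → Fin N → Bool} {s r t : ℕ} (C : RedNet N χ s r t)
    (hs : 1 ≤ s) (ht : 1 ≤ t) (q : ℕ) (hq : (4 * s ^ 2) ^ t ≤ q)
    (F L : ℕ → Finset (Fin N)) (hF : ∀ v ∈ C.verts, F v ⊆ C.X v ∧ (F v).card = q)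
    (hL : ∀ v ∈ C.verts, L v ⊆ C.X v ∧ (L v).card = q) (R : ℕ → ℕ → Prop)
    (hR : ∀ a ∈ C.verts, ∀ b ∈ C.verts, a < b → ¬ R a b →
      ¬ ∃ A B : Finset (Fin N), A ⊆ L a ∧ B ⊆ F b ∧ A.card = t ∧ B.card = t ∧
      ∀ a ∈ A, ∀ b ∈ B, χ a b = false)
    (hred : ¬ ∃ f : Fin (s + 1) → Fin N, StrictMono f ∧
      ∀ i j : Fin (s + 1), i < j → χ (f i) (f j) = true)
    (v w : ℕ) (hv : v ∈ C.verts) (hw : w ∈ C.verts) (hvd : C.dep v = s - 1)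
    (hvw : v < w) :
    ∃ g : {b // b ∈ rnP C w} → ℕ, Function.Injective g ∧
      ∀ b, g b ∈ rnP C v ∧ (g b = b ∨ R (g b) b) := by
  classical
  have hall := Finset.all_card_le_biUnion_card_iff_exists_injective
    (fun b : {b // b ∈ rnP C w} => (rnP C v).filter (fun a => a = (b : ℕ) ∨ R a b))
  suffices h : ∃ g : {b // b ∈ rnP C w} → ℕ, Function.Injective g ∧
      ∀ b : {b // b ∈ rnP C w}, g b ∈ (rnP C v).filter (fun a => a = (b : ℕ) ∨ R a b) by
    obtain ⟨g, hg, hg'⟩ := h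
    exact ⟨g, hg, fun b => Finset.mem_filter.1 (hg' b)⟩
  rw [← hall]
  intro B
  by_contra hlt
  push Not at hlt
  apply hred
  set NB := B.biUnion (fun b => (rnP C v).filter (fun a => a = (b : ℕ) ∨ R a b)) with hNB
  have hNsub : NB ⊆ rnP C v := Finset.biUnion_subset.2 (fun b _ => Finset.filter_subset _ _)
  set A := rnP C v \ NB with hA
  set B' := B.map (Function.Embedding.subtype _) with hB'
  have hB'm : ∀ b ∈ B', ∃ h : b ∈ rnP C w, (⟨b, h⟩ : {b // b ∈ rnP C w}) ∈ B := by
    intro b hb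
    obtain ⟨x, hx, rfl⟩ := Finset.mem_map.1 hb
    exact ⟨x.2, hx⟩
  have hAB : ∀ a ∈ A, ∀ b ∈ B', a ≠ b ∧ ¬ R a b := by
    intro a ha b hb
    obtain ⟨hbw, hbB⟩ := hB'm b hb
    obtain ⟨ha1, ha2⟩ := Finset.mem_sdiff.1 ha
    have : ¬ (a = b ∨ R a b) := fun h => ha2 (Finset.mem_biUnion.2 ⟨_, hbB, Finset.mem_filter.2 ⟨ha1, h⟩⟩)
    tauto
  have hdisj : Disjoint A B' := by
    rw [Finset.disjoint_left]
    intro a ha hb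
    exact (hAB a ha a hb).1 rfl
  have hcard : s + 1 ≤ (A ∪ B').card := by
    rw [Finset.card_union_of_disjoint hdisj, hA, Finset.card_sdiff_of_subset hNsub, hB', Finset.card_map,
      rnP_card C _ v hv hvd]
    have := Finset.card_le_card hNsub
    rw [rnP_card C _ v hv hvd] at this
    omega
  obtain ⟨W, hW, hWc⟩ := Finset.exists_subset_card_eq hcard
  have hAv : ∀ a ∈ A, a ∈ C.verts ∧ RnD C v a := fun a ha => (mem_rnP C).1 (Finset.mem_sdiff.1 ha).1
  have hBv : ∀ b ∈ B', b ∈ C.verts ∧ RnD C w b := fun b hb => (mem_rnP C).1 (hB'm b hb).1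
  have hWv : ∀ x ∈ W, x ∈ C.verts := by
    intro x hx
    rcases Finset.mem_union.1 (hW hx) with h | h
    · exact (hAv x h).1
    · exact (hBv x h).1
  let Y : ℕ → Finset (Fin N) := fun x => if x ∈ A then L x else F x
  have hYc : ∀ x ∈ W, Y x ⊆ C.X x ∧ (Y x).card = q := by
    intro x hx
    simp only [Y]
    split_ifs
    · exact hL x (hWv x hx)
    · exact hF x (hWv x hx)
  have hYno : ∀ x ∈ W, ∀ y ∈ W, x < y → ¬ ∃ A B : Finset (Fin N), A ⊆ Y x ∧ B ⊆ Y y ∧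
      A.card = t ∧ B.card = t ∧ ∀ a ∈ A, ∀ b ∈ B, χ a b = false := by
    intro x hx y hy hxy
    have hcomp : RnD C y x → ¬ ∃ A B : Finset (Fin N), A ⊆ Y x ∧ B ⊆ Y y ∧
      A.card = t ∧ B.card = t ∧ ∀ a ∈ A, ∀ b ∈ B, χ a b = false := by
      rintro hD ⟨A1, B1, h1, h2, h3⟩
      rcases rnD_trans C hD with h | h
      · omega
      · exact C.no_blue_Ktt x (hWv x hx) y (hWv y hy) h
          ⟨A1, B1, h1.trans (hYc x hx).1, h2.trans (hYc y hy).1, h3⟩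
    have hnot : ¬ RnD C x y := by
      intro h
      have := rnD_le C (hWv x hx) h
      omega
    by_cases hD : RnD C y x
    · exact hcomp hD
    rcases Finset.mem_union.1 (hW hx) with hxA | hxB <;> rcases Finset.mem_union.1 (hW hy) with hyA | hyB
    · rcases rnD_total C (hAv x hxA).2 (hAv y hyA).2 with h | h
      · exact absurd h hnot
      · exact absurd h hD
    · have hyA : y ∉ A := fun h => Finset.disjoint_left.1 hdisj h hyB
      simp only [Y, if_pos hxA, if_neg hyA]
      exact hR x (hWv x hx) y (hWv y hy) hxy (hAB x hxA y hyB).2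
    · have := rn_incomp C hv hw hvw (hAv y hyA).2 (hBv x hxB).2 hD hnot
      omega
    · rcases rnD_total C (hBv x hxB).2 (hBv y hyB).2 with h | h
      · exact absurd h hnot
      · exact absurd h hD
  let o := W.orderEmbOfFin hWc
  have ho : ∀ i, o i ∈ W := fun i => W.orderEmbOfFin_mem hWc i
  refine rn_red q s t hs ht hq χ (fun i => Y (o i)) (fun i => (hYc _ (ho i)).2) ?_ ?_
  · intro i j hij a ha b hb
    exact C.X_ordered _ (hWv _ (ho i)) _ (hWv _ (ho j)) (o.strictMono hij) a ((hYc _ (ho i)).1 ha) b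
      ((hYc _ (ho j)).1 hb)
  · intro i j hij
    exact hYno _ (ho i) _ (ho j) (o.strictMono hij)

lemma rn_sum {N : ℕ} {χ : Fin N → Fin N → Bool} {s r t : ℕ} (C : RedNet N χ s r t)
    (l : ℕ → ℕ) (hl : ∀ v ∈ C.verts, 1 ≤ l v) (R : ℕ → ℕ → Prop)
    (hlR : ∀ a b, R a b → l a + 1 ≤ l b)
    (H : ∀ v w, v ∈ C.verts → w ∈ C.verts → C.dep v = s - 1 → C.dep w = s - 1 → v < w →
      ∃ g : {b // b ∈ rnP C w} → ℕ, Function.Injective g ∧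
      ∀ b, g b ∈ rnP C v ∧ (g b = b ∨ R (g b) b)) (T : Finset ℕ) :
    (∀ v ∈ T, v ∈ C.verts ∧ C.dep v = s - 1) → T.Nonempty →
    ∃ v ∈ T, (∀ u ∈ T, u ≤ v) ∧ (T.biUnion (rnP C)).card ≤ ∑ x ∈ rnP C v, l x := by
  classical
  induction T using Finset.induction_on_max with
  | empty => intro _ h; exact absurd h (by simp)
  | insert w T hmax ih =>
    intro hT _
    have hbase : (rnP C w).card ≤ ∑ x ∈ rnP C w, l x := by
      rw [Finset.card_eq_sum_ones]
      exact Finset.sum_le_sum (fun x hx => hl x ((mem_rnP C).1 hx).1)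
    refine ⟨w, Finset.mem_insert_self _ _, ?_, ?_⟩
    · intro u hu
      rcases Finset.mem_insert.1 hu with h | h
      · exact h.le
      · exact (hmax u h).le
    rcases T.eq_empty_or_nonempty with rfl | hne
    · simpa using hbase
    obtain ⟨v, hvT, hvmax, hv⟩ := ih (fun u hu => hT u (Finset.mem_insert_of_mem hu)) hne
    have hvV := hT v (Finset.mem_insert_of_mem hvT)
    have hwV := hT w (Finset.mem_insert_self _ _)
    obtain ⟨g, hgi, hg⟩ := H v w hvV.1 hwV.1 hvV.2 hwV.2 (hmax v hvT)
    -- g is onto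
    have himg : Finset.univ.image g = rnP C v := by
      apply Finset.eq_of_subset_of_card_le
      · intro x hx
        obtain ⟨b, _, rfl⟩ := Finset.mem_image.1 hx
        exact (hg b).1
      · rw [Finset.card_image_of_injective _ hgi, Finset.card_univ, Fintype.card_coe,
          rnP_card C _ v hvV.1 hvV.2, rnP_card C _ w hwV.1 hwV.2]
    have h1 : ∑ x ∈ rnP C v, l x = ∑ b : {b // b ∈ rnP C w}, l (g b) := by
      rw [← himg, Finset.sum_image (fun a _ b _ h => hgi h)]
    have h2 : ∑ b : {b // b ∈ rnP C w}, (l (g b) + if (b : ℕ) ∈ rnP C v then 0 else 1) ≤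
        ∑ b : {b // b ∈ rnP C w}, l b := by
      apply Finset.sum_le_sum
      intro b _
      obtain ⟨hb1, hb2⟩ := hg b
      rcases hb2 with hb2 | hb2
      · rw [hb2] at hb1 ⊢
        simp [hb1]
      · have := hlR _ _ hb2
        split_ifs <;> omega
    rw [Finset.sum_add_distrib, ← h1] at h2
    have h3 : ∑ b : {b // b ∈ rnP C w}, l b = ∑ x ∈ rnP C w, l x :=
      Finset.sum_coe_sort (rnP C w) l
    have h4 : ∑ b : {b // b ∈ rnP C w}, (if (b : ℕ) ∈ rnP C v then 0 else 1) =
        (rnP C w \ rnP C v).card := by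
      rw [Finset.sum_coe_sort (rnP C w) (fun b => if b ∈ rnP C v then 0 else 1),
        Finset.sdiff_eq_filter, Finset.card_filter]
      apply Finset.sum_congr rfl
      intro x _
      split_ifs <;> simp_all
    have h5 : (insert w T).biUnion (rnP C) ⊆ T.biUnion (rnP C) ∪ (rnP C w \ rnP C v) := by
      intro x hx
      rw [Finset.biUnion_insert, Finset.mem_union] at hx
      rw [Finset.mem_union, Finset.mem_sdiff]
      rcases hx with hx | hx
      · by_cases hxv : x ∈ rnP C v
        · exact Or.inl (Finset.mem_biUnion.2 ⟨v, hvT, hxv⟩)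
        · exact Or.inr ⟨hx, hxv⟩
      · exact Or.inl hx
    have h6 := (Finset.card_le_card h5).trans (Finset.card_union_le _ _)
    rw [h3, h4] at h2
    omega

/-- let `s ≥ 1`, `n ≥ t ≥ 1`, and suppose a red/blue coloring of
`K_N` admits an `s`-red-net of order `r ≥ 3·(4s²)^t` with `|V(F)| ≥ 3sn/r`. Then the
coloring contains a red clique of size `s + 1` or a blue ordered copy of `P_n^t`. -/
theorem stmt16 (s t n r N : ℕ) (hs : 1 ≤ s) (ht : 1 ≤ t) (hn : t ≤ n)
    (χ : Fin N → Fin N → Bool) (hr : 3 * (4 * s ^ 2) ^ t ≤ r)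
    (C : RedNet N χ s r t) (hF : (3 * s * n : ℝ) / r ≤ (C.verts.card : ℝ)) :
    (∃ f : Fin (s + 1) → Fin N, StrictMono f ∧
      ∀ i j : Fin (s + 1), i < j → χ (f i) (f j) = true) ∨
    (∃ f : Fin n → Fin N, StrictMono f ∧
      ∀ i j : Fin n, i < j → (j : ℕ) ≤ (i : ℕ) + t → χ (f i) (f j) = false) := by
  classical
  by_cases hred : ∃ f : Fin (s + 1) → Fin N, StrictMono f ∧
      ∀ i j : Fin (s + 1), i < j → χ (f i) (f j) = true
  · exact Or.inl hred
  right
  obtain ⟨q, hqdef⟩ : ∃ q, q = r / 3 := ⟨_, rfl⟩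
  obtain ⟨c, hcdef⟩ : ∃ c, c = r - 2 * q := ⟨_, rfl⟩
  have hq : (4 * s ^ 2) ^ t ≤ q := by omega
  have hrc : r = q + (c + q) := by omega
  have hcq : q ≤ c := by omega
  have hc3 : r ≤ 3 * c := by omega
  have htq : t ≤ q := by
    refine le_trans ?_ hq
    have h1 : 1 < 4 * s ^ 2 := by nlinarith
    exact (Nat.lt_pow_self h1).le
  have hrpos : 0 < r := by omega
  have hspl : ∀ v, ∃ F M L : Finset (Fin N), v ∈ C.verts → (F ⊆ C.X v ∧ M ⊆ C.X v ∧ L ⊆ C.X v ∧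
      F.card = q ∧ M.card = c ∧ L.card = q ∧
      (∀ y ∈ F, ∀ z ∈ M, y < z) ∧ (∀ y ∈ M, ∀ z ∈ L, y < z)) := by
    intro v
    by_cases hv : v ∈ C.verts
    · obtain ⟨F, M, L, h⟩ := rn_thirds (C.X v) q c (by rw [C.X_card v hv, ← hrc])
      exact ⟨F, M, L, fun _ => h⟩
    · exact ⟨∅, ∅, ∅, fun h => absurd h hv⟩
  choose F M L hFML using hspl
  let R : ℕ → ℕ → Prop := fun a b => a ∈ C.verts ∧ b ∈ C.verts ∧ a < b ∧
    ∃ A B : Finset (Fin N), A ⊆ L a ∧ B ⊆ F b ∧ A.card = t ∧ B.card = t ∧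
      ∀ a ∈ A, ∀ b ∈ B, χ a b = false
  obtain ⟨l, hl, hlR⟩ := rn_len C.verts R (fun a b h => ⟨h.2.2.1, h.1, h.2.1⟩)
  have hpos : 0 < C.verts.card := by
    have h1 : (0 : ℝ) < (3 * s * n : ℝ) / r := by
      have : 0 < n := by omega
      positivity
    exact_mod_cast lt_of_lt_of_le h1 hF
  have hnat : 3 * s * n ≤ C.verts.card * r := by
    have hr' : (0 : ℝ) < r := by exact_mod_cast hrpos
    rw [div_le_iff₀ hr'] at hF
    exact_mod_cast hF
  -- leaves
  have hleaf : ∀ v ∈ C.verts, ∃ w ∈ C.verts, C.dep w = s - 1 ∧ RnD C w v := fun v hv =>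
    rn_leaf C (s - 1 - C.dep v) v hv (by have := C.depth_le v hv; omega)
  obtain ⟨v0, hv0⟩ := Finset.card_pos.1 hpos
  obtain ⟨w0, hw0, hw0d, _⟩ := hleaf v0 hv0
  obtain ⟨v, hvT, _, hv⟩ := rn_sum C l (fun v hv => (hl v hv).1) R hlR
    (fun v w hv hw hvd _ hvw => rn_hall C hs ht q hq F L
      (fun v hv => ⟨(hFML v hv).1, (hFML v hv).2.2.2.1⟩)
      (fun v hv => ⟨(hFML v hv).2.2.1, (hFML v hv).2.2.2.2.2.1⟩) R
      (fun a ha b hb hab hnR h => hnR ⟨ha, hb, hab, h⟩) hred v w hv hw hvd hvw)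
    (C.verts.filter (fun v => C.dep v = s - 1)) (fun v hv => Finset.mem_filter.1 hv)
    ⟨w0, Finset.mem_filter.2 ⟨hw0, hw0d⟩⟩
  obtain ⟨hvV, hvd⟩ := Finset.mem_filter.1 hvT
  have hcov : C.verts ⊆ (C.verts.filter (fun v => C.dep v = s - 1)).biUnion (rnP C) := by
    intro x hx
    obtain ⟨w, hw, hwd, hD⟩ := hleaf x hx
    exact Finset.mem_biUnion.2 ⟨w, Finset.mem_filter.2 ⟨hw, hwd⟩, (mem_rnP C).2 ⟨hx, hD⟩⟩
  have hsum := (Finset.card_le_card hcov).trans hv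
  have hPc : (rnP C v).card = s := by rw [rnP_card C _ v hvV hvd]; omega
  obtain ⟨x, hxP, hx⟩ : ∃ x ∈ rnP C v, C.verts.card ≤ s * l x := by
    by_contra hcon
    push Not at hcon
    have hne : (rnP C v).Nonempty := Finset.card_pos.1 (by omega)
    have h1 := Finset.sum_lt_sum_of_nonempty hne hcon
    rw [← Finset.mul_sum, Finset.sum_const, hPc, smul_eq_mul] at h1
    have := Nat.lt_of_mul_lt_mul_left h1
    omega
  have hxV := ((mem_rnP C).1 hxP).1
  have hpath : ∀ v m, RnCh C.verts R v m → v ∈ C.verts ∧ ∃ S, RnGT χ t S (M v) ∧ m * c ≤ S.card := by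
    intro v m h
    induction h with
    | one v hv =>
      obtain ⟨_, hM, _, _, hMc, _⟩ := hFML v hv
      refine ⟨hv, M v, rn_base χ t _ (by omega) ?_, by omega⟩
      exact fun a ha b hb hab => C.X_blue v hv a (hM ha) b (hM hb) hab
    | step u v m h hR ih =>
      obtain ⟨_, S, hS, hSc⟩ := ih
      obtain ⟨hu, hv, huv, A, B, hA, hB, hAc, hBc, hblue⟩ := hR
      obtain ⟨_, hMu, hLu, _, hMuc, _, _, hMLu⟩ := hFML u hu
      obtain ⟨hFv, hMv, _, _, hMvc, _, hFMv, _⟩ := hFML v hv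
      have e1 := rn_ext χ t ht S (M u) A hS (fun a ha b hb => hMLu a ha b (hA hb))
        (fun a ha b hb => C.X_blue u hu a (hMu ha) b (hLu (hA hb)) (hMLu a ha b (hA hb)))
        (fun a ha b hb hab => C.X_blue u hu a (hLu (hA ha)) b (hLu (hA hb)) hab) hAc.ge
      have e2 := rn_ext χ t ht (S ∪ A) A B e1.1
        (fun a ha b hb => C.X_ordered u hu v hv huv a (hLu (hA ha)) b (hFv (hB hb))) hblue
        (fun a ha b hb hab => C.X_blue v hv a (hFv (hB ha)) b (hFv (hB hb)) hab) hBc.ge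
      have e3 := rn_ext χ t ht (S ∪ A ∪ B) B (M v) e2.1
        (fun a ha b hb => hFMv a (hB ha) b hb)
        (fun a ha b hb => C.X_blue v hv a (hFv (hB ha)) b (hMv hb) (hFMv a (hB ha) b hb))
        (fun a ha b hb hab => C.X_blue v hv a (hMv ha) b (hMv hb) hab) (by omega)
      refine ⟨hv, _, e3.1, ?_⟩
      rw [e3.2, e2.2, e1.2, hMvc, add_mul, one_mul]
      omega
  obtain ⟨_, S, hS, hSc⟩ := hpath x _ (hl x hxV).2
  refine rn_fin χ t n S _ hS (le_trans ?_ hSc)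
  have h1 : (3 * s) * n ≤ (3 * s) * (l x * c) := by
    calc _ ≤ C.verts.card * r := hnat
      _ ≤ (s * l x) * (3 * c) := Nat.mul_le_mul hx hc3
      _ = _ := by ring
  exact Nat.le_of_mul_le_mul_left h1 (by omega)
end

section
/- For all positive integers t and n, the ordered Ramsey number satisfies R_<(P_n[t], K_n) ≤ (2 t n^3)^{2t−1}. -/
/-- `χ i j` is the color of the edge `{i, j}` for `i < j`: `true` = red, `false` = blue.
A red ordered copy of `P_n[t]`, the `t`-blowup of the monotone path `P_n`: it has
`n·t` vertices, vertex `i` (0-indexed) lying in block `i / t`, and two vertices are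
adjacent exactly when their blocks are consecutive. -/
def ContainsRedPathBlowup (N n t : ℕ) (χ : Fin N → Fin N → Bool) : Prop :=
  ∃ f : Fin (n * t) → Fin N, StrictMono f ∧
    ∀ i j : Fin (n * t), (j : ℕ) / t = (i : ℕ) / t + 1 → χ (f i) (f j) = true

/-- A blue ordered copy of the complete ordered graph `K_m`. -/
def ContainsBlueClique (N m : ℕ) (χ : Fin N → Fin N → Bool) : Prop :=
  ∃ f : Fin m → Fin N, StrictMono f ∧ ∀ i j : Fin m, i < j → χ (f i) (f j) = false

/-- The ordered Ramsey number `R_<(P_n[t], K_m)`. -/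
noncomputable def ordRamseyBlowupClique (n t m : ℕ) : ℕ :=
  sInf {N | ∀ χ : Fin N → Fin N → Bool,
    ContainsRedPathBlowup N n t χ ∨ ContainsBlueClique N m χ}

namespace Blow

variable {N : ℕ}

/-- forward red edge -/
def Red (χ : Fin N → Fin N → Bool) (a v : Fin N) : Prop := a < v ∧ χ a v = true

/-- `A` ends a red chain of `k+1` sets of size `t`. -/
def PathEnd (χ : Fin N → Fin N → Bool) (t : ℕ) : ℕ → Finset (Fin N) → Prop
  | 0, A => A.card = t
  | k + 1, B => B.card = t ∧ ∃ A, PathEnd χ t k A ∧ ∀ a ∈ A, ∀ b ∈ B, Red χ a b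

theorem PathEnd.chain {χ : Fin N → Fin N → Bool} {t : ℕ} : ∀ (k : ℕ) (A : Finset (Fin N)),
    PathEnd χ t k A → ∃ F : ℕ → Finset (Fin N), F k = A ∧ (∀ i ≤ k, (F i).card = t) ∧
      ∀ i < k, ∀ a ∈ F i, ∀ b ∈ F (i + 1), Red χ a b := by
  intro k
  induction k with
  | zero =>
    intro A hA
    exact ⟨fun _ => A, rfl, fun i _ => hA, fun i hi => absurd hi (Nat.not_lt_zero _)⟩
  | succ k ih =>
    intro B hB
    obtain ⟨hc, A, hA, hAB⟩ := hB
    obtain ⟨F, hF, hFc, hFr⟩ := ih A hA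
    refine ⟨fun i => if i ≤ k then F i else B, by simp, ?_, ?_⟩
    · intro i hi
      by_cases h : i ≤ k
      · simp only [h, if_true]; exact hFc i h
      · simp only [h, if_false]; exact hc
    · intro i hi a ha b hb
      have h1 : i ≤ k := by omega
      simp only [h1, if_true] at ha
      by_cases h : i + 1 ≤ k
      · simp only [h, if_true] at hb
        exact hFr i (by omega) a ha b hb
      · simp only [h, if_false] at hb
        have : i = k := by omega
        subst this
        rw [hF] at ha
        exact hAB a ha b hb

theorem redBlowup_of_pathEnd {χ : Fin N → Fin N → Bool} {t k : ℕ} (ht : 1 ≤ t)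
    {A : Finset (Fin N)} (hA : PathEnd χ t k A) : ContainsRedPathBlowup N (k + 1) t χ := by
  obtain ⟨F, -, hc, hr⟩ := PathEnd.chain k A hA
  have hq : ∀ i : Fin ((k + 1) * t), (i : ℕ) / t ≤ k := by
    intro i
    have := (Nat.div_lt_iff_lt_mul (show 0 < t by omega)).2 i.2
    omega
  have hlt : ∀ q d : ℕ, q + 1 + d ≤ k → ∀ a ∈ F q, ∀ b ∈ F (q + 1 + d), a < b := by
    intro q d
    induction d with
    | zero => intro h a ha b hb; exact (hr q (by omega) a ha b hb).1
    | succ d ih =>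
      intro h a ha b hb
      have hne : (F (q + 1 + d)).Nonempty := by
        rw [← Finset.card_pos, hc _ (by omega)]; omega
      obtain ⟨c, hcm⟩ := hne
      exact (ih (by omega) a ha c hcm).trans (hr (q + 1 + d) (by omega) c hcm b hb).1
  let f : Fin ((k + 1) * t) → Fin N := fun i =>
    (F ((i : ℕ) / t)).orderEmbOfFin (hc _ (hq i)) ⟨(i : ℕ) % t, Nat.mod_lt _ (by omega)⟩
  have hf : ∀ i : Fin ((k + 1) * t), f i ∈ F ((i : ℕ) / t) := fun i => Finset.orderEmbOfFin_mem _ _ _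
  refine ⟨f, ?_, ?_⟩
  · intro i j hij
    have hij' : (i : ℕ) < j := hij
    rcases (Nat.div_le_div_right (c := t) hij'.le).lt_or_eq with h | h
    · obtain ⟨d, hd⟩ := Nat.exists_eq_add_of_le (show (i : ℕ) / t + 1 ≤ (j : ℕ) / t from h)
      have := hlt ((i : ℕ) / t) d (by rw [← hd]; exact hq j) (f i) (hf i) (f j)
        (by rw [← hd]; exact hf j)
      exact this
    · have hm : (i : ℕ) % t < (j : ℕ) % t := by
        have h1 := Nat.div_add_mod (i : ℕ) t
        have h2 := Nat.div_add_mod (j : ℕ) t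
        rw [← h] at h2
        omega
      have key : ∀ (q q' : ℕ) (hqq : q = q') (h1 : (F q).card = t) (h2 : (F q').card = t)
          (x y : Fin t), x < y → (F q).orderEmbOfFin h1 x < (F q').orderEmbOfFin h2 y := by
        intro q q' hqq h1 h2 x y hxy
        subst hqq
        simpa using hxy
      exact key _ _ h _ _ _ _ hm
  · intro i j hij
    have := hr ((i : ℕ) / t) (by have := hq j; omega) (f i) (hf i) (f j) (by rw [← hij]; exact hf j)
    exact this.2

theorem greedy {χ : Fin N → Fin N → Bool} {ι : Type} (c : ℕ) : ∀ (m : ℕ)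
    (I : Finset ι) (g : ι → Finset (Fin N)), I.card = m →
    (∀ i ∈ I, c * m + 1 ≤ (g i).card) →
    (∀ i ∈ I, ∀ j ∈ I, i ≠ j → Disjoint (g i) (g j)) →
    (∀ i ∈ I, ∀ j ∈ I, i ≠ j → ∀ v ∈ g j, ∀ T ⊆ g i, (∀ a ∈ T, Red χ a v) → T.card ≤ c) →
    ∃ S : Finset (Fin N), S.card = m ∧ S ⊆ I.biUnion g ∧
      ∀ a ∈ S, ∀ b ∈ S, a < b → χ a b = false := by
  classical
  intro m
  induction m with
  | zero => intro I g _ _ _ _; exact ⟨∅, by simp⟩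
  | succ m ih =>
    intro I g hI hcard hdisj hred
    have hne : (I.biUnion g).Nonempty := by
      obtain ⟨i, hi⟩ : I.Nonempty := by rw [← Finset.card_pos]; omega
      obtain ⟨x, hx⟩ : (g i).Nonempty := by
        rw [← Finset.card_pos]; have := hcard i hi; omega
      exact ⟨x, Finset.mem_biUnion.2 ⟨i, hi, hx⟩⟩
    obtain ⟨v, hv, hmax⟩ := Finset.exists_max_image _ (fun x => x) hne
    obtain ⟨j, hj, hvj⟩ := Finset.mem_biUnion.1 hv
    obtain ⟨S, hS, hSs, hSi⟩ := ih (I.erase j) (fun i => (g i).filter (fun a => ¬ Red χ a v))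
      (by rw [Finset.card_erase_of_mem hj]; omega)
      (by
        intro i hi
        have hi' := Finset.mem_erase.1 hi
        have h1 := hcard i hi'.2
        have h2 := hred i hi'.2 j hj hi'.1 v hvj ((g i).filter (fun a => Red χ a v))
          (Finset.filter_subset _ _) (fun a ha => (Finset.mem_filter.1 ha).2)
        have h3 := Finset.card_filter_add_card_filter_not (s := g i) (fun a => Red χ a v)
        have h4 : c * (m + 1) = c * m + c := by ring
        omega)
      (by
        intro i hi j hj hij
        exact Finset.disjoint_of_subset_left (Finset.filter_subset _ _)
          (Finset.disjoint_of_subset_right (Finset.filter_subset _ _)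
            (hdisj i (Finset.mem_of_mem_erase hi) j (Finset.mem_of_mem_erase hj) hij)))
      (by
        intro i hi j hj hij w hw T hT hTr
        exact hred i (Finset.mem_of_mem_erase hi) j (Finset.mem_of_mem_erase hj) hij w
          (Finset.mem_filter.1 hw).1 T (hT.trans (Finset.filter_subset _ _)) hTr)
    have hmem : ∀ a ∈ S, ∃ i ∈ I, i ≠ j ∧ a ∈ g i ∧ ¬ Red χ a v := by
      intro a ha
      obtain ⟨i, hi, hai⟩ := Finset.mem_biUnion.1 (hSs ha)
      have := Finset.mem_filter.1 hai
      exact ⟨i, Finset.mem_of_mem_erase hi, Finset.ne_of_mem_erase hi, this.1, this.2⟩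
    have hvS : v ∉ S := by
      intro h
      obtain ⟨i, hi, hij, hvi, -⟩ := hmem v h
      exact Finset.disjoint_left.1 (hdisj i hi j hj hij) hvi hvj
    have hle : ∀ a ∈ S, a ≤ v := by
      intro a ha
      obtain ⟨i, hi, -, hai, -⟩ := hmem a ha
      exact hmax a (Finset.mem_biUnion.2 ⟨i, hi, hai⟩)
    refine ⟨insert v S, by rw [Finset.card_insert_of_notMem hvS, hS], ?_, ?_⟩
    · intro a ha
      rcases Finset.mem_insert.1 ha with rfl | ha
      · exact hv
      · obtain ⟨i, hi, -, hai, -⟩ := hmem a ha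
        exact Finset.mem_biUnion.2 ⟨i, hi, hai⟩
    · intro a ha b hb hab
      rcases Finset.mem_insert.1 ha with rfl | ha' <;> rcases Finset.mem_insert.1 hb with rfl | hb'
      · exact absurd hab (lt_irrefl _)
      · exact absurd hab (not_lt.2 (hle b hb'))
      · obtain ⟨i, hi, -, hai, hr⟩ := hmem a ha'
        by_contra h
        exact hr ⟨hab, by simpa using h⟩
      · exact hSi a ha' b hb' hab

theorem digraph {α : Type} (R : α → α → Prop) (D : ℕ) : ∀ (n : ℕ) (F : Finset α),
    n * (2 * D + 1) ≤ F.card →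
    (∀ x ∈ F, ∀ T ⊆ F, (∀ y ∈ T, R x y) → T.card ≤ D) →
    ∃ G ⊆ F, G.card = n ∧ ∀ x ∈ G, ∀ y ∈ G, x ≠ y → ¬ R x y := by
  classical
  intro n
  induction n with
  | zero => intro F _ _; exact ⟨∅, by simp⟩
  | succ n ih =>
    intro F hF hout
    have hpos : 0 < F.card := by nlinarith
    obtain ⟨x, hx, hin⟩ : ∃ x ∈ F, (F.filter (fun y => R y x)).card ≤ D := by
      by_contra! h
      have h1 : F.card * (D + 1) ≤ ∑ x ∈ F, (F.filter (fun y => R y x)).card := by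
        rw [← smul_eq_mul]
        exact Finset.card_nsmul_le_sum _ _ _ (fun x hx => h x hx)
      have h2 : ∑ x ∈ F, (F.filter (fun y => R x y)).card ≤ F.card * D := by
        rw [← smul_eq_mul]
        exact Finset.sum_le_card_nsmul _ _ _ (fun x hx => hout x hx _ (Finset.filter_subset _ _)
          (fun y hy => (Finset.mem_filter.1 hy).2))
      have h3 := Finset.sum_card_bipartiteAbove_eq_sum_card_bipartiteBelow (s := F) (t := F) R
      simp only [Finset.bipartiteAbove, Finset.bipartiteBelow] at h3
      nlinarith
    have ho := hout x hx (F.filter (fun y => R x y)) (Finset.filter_subset _ _)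
          (fun y hy => (Finset.mem_filter.1 hy).2)
    set B := insert x (F.filter (fun y => R y x) ∪ F.filter (fun y => R x y)) with hB
    have hBc : B.card ≤ 2 * D + 1 := by
      rw [hB]
      have h1 := Finset.card_insert_le x (F.filter (fun y => R y x) ∪ F.filter (fun y => R x y))
      have h2 := Finset.card_union_le (F.filter (fun y => R y x)) (F.filter (fun y => R x y))
      omega
    obtain ⟨G, hG, hGc, hGi⟩ := ih (F \ B) (by
        have := Finset.le_card_sdiff B F
        have h4 : (n + 1) * (2 * D + 1) = n * (2 * D + 1) + (2 * D + 1) := by ring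
        omega)
      (fun y hy T hT hTr => hout y (Finset.sdiff_subset hy) T (hT.trans Finset.sdiff_subset) hTr)
    have hnot : ∀ y ∈ G, y ≠ x ∧ ¬ R y x ∧ ¬ R x y := by
      intro y hy
      have := Finset.mem_sdiff.1 (hG hy)
      simp only [hB, Finset.mem_insert, Finset.mem_union, Finset.mem_filter, not_or] at this
      tauto
    refine ⟨insert x G, ?_, ?_, ?_⟩
    · exact Finset.insert_subset hx (hG.trans Finset.sdiff_subset)
    · rw [Finset.card_insert_of_notMem (fun h => (hnot x h).1 rfl), hGc]
    · intro a ha b hb hab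
      rcases Finset.mem_insert.1 ha with rfl | ha' <;> rcases Finset.mem_insert.1 hb with rfl | hb'
      · exact absurd rfl hab
      · exact (hnot b hb').2.2
      · exact (hnot a ha').2.1
      · exact hGi a ha' b hb' hab

theorem key {χ : Fin N → Fin N → Bool} {t n s : ℕ} (ht : 1 ≤ t) (hs : s = (t - 1) * n + 1)
    (W : Finset (Fin N)) (F : Finset (Finset (Fin N)))
    (hFW : ∀ U ∈ F, U ⊆ W) (hFs : ∀ U ∈ F, U.card = s)
    (hdisj : ∀ U ∈ F, ∀ U' ∈ F, U ≠ U' → Disjoint U U')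
    (hF : n * (2 * (s.choose t * (s - 1)) + 1) ≤ F.card)
    (hco : ∀ U ∈ F, ∀ A ⊆ U, A.card = t → ∀ T ⊆ W, (∀ v ∈ T, ∀ a ∈ A, Red χ a v) →
      T.card ≤ s - 1) :
    ContainsBlueClique N n χ := by
  classical
  let R : Finset (Fin N) → Finset (Fin N) → Prop := fun U U' =>
    ∃ v ∈ U', ∃ A ⊆ U, A.card = t ∧ ∀ a ∈ A, Red χ a v
  obtain ⟨G, hGF, hGc, hG⟩ := digraph R (s.choose t * (s - 1)) n F hF (by
    intro U hU T hT hTR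
    rcases T.eq_empty_or_nonempty with rfl | ⟨y0, hy0⟩
    · simp
    haveI : Nonempty (Fin N) := ⟨(hTR y0 hy0).choose⟩
    choose! f hf1 hf2 using hTR
    have hinj : Set.InjOn f (T : Set (Finset (Fin N))) := by
      intro a ha b hb hab
      by_contra hne
      refine Finset.disjoint_left.1 (hdisj a (hT ha) b (hT hb) hne) (hf1 a ha) ?_
      rw [hab]; exact hf1 b hb
    rw [← Finset.card_image_of_injOn hinj]
    have hsub : T.image f ⊆ (U.powersetCard t).biUnion
        (fun A => W.filter (fun v => ∀ a ∈ A, Red χ a v)) := by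
      intro v hv
      obtain ⟨x, hx, rfl⟩ := Finset.mem_image.1 hv
      obtain ⟨A, hA, hAc, hAr⟩ := hf2 x hx
      exact Finset.mem_biUnion.2 ⟨A, Finset.mem_powersetCard.2 ⟨hA, hAc⟩,
        Finset.mem_filter.2 ⟨hFW x (hT hx) (hf1 x hx), hAr⟩⟩
    refine (Finset.card_le_card hsub).trans ?_
    have := Finset.card_biUnion_le_card_mul (U.powersetCard t)
        (fun A => W.filter (fun v => ∀ a ∈ A, Red χ a v)) (s - 1) (by
          intro A hA
          have hA' := Finset.mem_powersetCard.1 hA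
          exact hco U hU A hA'.1 hA'.2 _ (Finset.filter_subset _ _)
            (fun v hv => (Finset.mem_filter.1 hv).2))
    rwa [Finset.card_powersetCard, hFs U hU] at this)
  obtain ⟨S, hSc, -, hS⟩ := greedy (χ := χ) (t - 1) n G (fun U => U) hGc
    (fun U hU => by rw [hFs U (hGF hU), hs])
    (fun U hU U' hU' h => hdisj U (hGF hU) U' (hGF hU') h)
    (by
      intro U hU U' hU' hne v hv T hT hTr
      by_contra! hlt
      obtain ⟨A, hA, hAc⟩ := Finset.exists_subset_card_eq (show t ≤ T.card by omega)
      exact hG U hU U' hU' hne ⟨v, hv, A, hA.trans hT, hAc, fun a ha => hTr a (hA ha)⟩)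
  exact ⟨S.orderEmbOfFin hSc, (S.orderEmbOfFin hSc).strictMono, fun i j hij =>
    hS _ (Finset.orderEmbOfFin_mem _ _ _) _ (Finset.orderEmbOfFin_mem _ _ _)
      ((S.orderEmbOfFin hSc).strictMono hij)⟩

theorem exists_family {s : ℕ} (hs : 1 ≤ s) (Q : Finset (Fin N) → Prop) (W : Finset (Fin N)) :
    ∃ F : Finset (Finset (Fin N)), (∀ U ∈ F, U ⊆ W ∧ U.card = s ∧ Q U) ∧
      (∀ U ∈ F, ∀ U' ∈ F, U ≠ U' → Disjoint U U') ∧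
      ∀ U ⊆ W \ F.biUnion id, U.card = s → ¬ Q U := by
  classical
  let P : Finset (Finset (Fin N)) → Prop := fun F => (∀ U ∈ F, U ⊆ W ∧ U.card = s ∧ Q U) ∧
      (∀ U ∈ F, ∀ U' ∈ F, U ≠ U' → Disjoint U U')
  obtain ⟨F, hF, hmax⟩ := Finset.exists_max_image (Finset.univ.filter P) Finset.card
    ⟨∅, by simp [P]⟩
  have hFP : P F := (Finset.mem_filter.1 hF).2
  refine ⟨F, hFP.1, hFP.2, ?_⟩
  intro U hU hUs hQ
  have hd : ∀ U' ∈ F, Disjoint U U' := by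
    intro U' hU'
    rw [Finset.disjoint_left]
    intro x hx hx'
    exact (Finset.mem_sdiff.1 (hU hx)).2 (Finset.mem_biUnion.2 ⟨U', hU', hx'⟩)
  have hUF : U ∉ F := by
    intro h
    have := hd U h
    rw [disjoint_self] at this
    rw [this] at hUs
    simp at hUs
    omega
  have hP : P (insert U F) := by
    refine ⟨?_, ?_⟩
    · intro A hA
      rcases Finset.mem_insert.1 hA with rfl | hA
      · exact ⟨hU.trans Finset.sdiff_subset, hUs, hQ⟩
      · exact hFP.1 A hA
    · intro A hA B hB hAB
      rcases Finset.mem_insert.1 hA with rfl | hA' <;> rcases Finset.mem_insert.1 hB with rfl | hB'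
      · exact absurd rfl hAB
      · exact hd B hB'
      · exact (hd A hA').symm
      · exact hFP.2 A hA' B hB' hAB
  have := hmax (insert U F) (Finset.mem_filter.2 ⟨Finset.mem_univ _, hP⟩)
  rw [Finset.card_insert_of_notMem hUF] at this
  omega

theorem level {χ : Fin N → Fin N → Bool} {t n s : ℕ} (ht : 1 ≤ t) (hs : s = (t - 1) * n + 1)
    (hblue : ¬ ContainsBlueClique N n χ) : ∀ (j : ℕ) (W : Finset (Fin N)),
    (∀ U ⊆ W, U.card = s → ¬ ∀ A ⊆ U, A.card = t → PathEnd χ t j A) →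
    W.card < s + j * (s * (n * (2 * (s.choose t * (s - 1)) + 1))) := by
  classical
  intro j
  induction j with
  | zero =>
    intro W hW
    by_contra! h
    obtain ⟨U, hU, hUc⟩ := Finset.exists_subset_card_eq (show s ≤ W.card by omega)
    exact hW U hU hUc (fun A _ hA => hA)
  | succ j ih =>
    intro W hW
    obtain ⟨F, hF, hd, hrest⟩ := exists_family (s := s) (by omega)
      (fun U => ∀ A ⊆ U, A.card = t → PathEnd χ t j A) W
    have h1 := ih _ hrest
    have h2 : (F.biUnion id).card ≤ F.card * s :=
      Finset.card_biUnion_le_card_mul _ _ _ (fun U hU => (hF U hU).2.1.le)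
    have h3 := Finset.le_card_sdiff (F.biUnion id) W
    have h4 : F.card < n * (2 * (s.choose t * (s - 1)) + 1) := by
      by_contra! h
      refine hblue (key ht hs W F (fun U hU => (hF U hU).1) (fun U hU => (hF U hU).2.1) hd h ?_)
      intro U hU A hA hAc T hT hTr
      by_contra! hlt
      obtain ⟨X, hX, hXc⟩ := Finset.exists_subset_card_eq (show s ≤ T.card by omega)
      refine hW X (hX.trans hT) hXc ?_
      intro B hB hBc
      exact ⟨hBc, A, (hF U hU).2.2 A hA hAc, fun a ha b hb => hTr b (hX (hB hb)) a ha⟩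
    generalize n * (2 * (s.choose t * (s - 1)) + 1) = M at *
    have h5 : F.card * s ≤ s * M := by rw [mul_comm]; exact Nat.mul_le_mul_left _ h4.le
    have h6 : (j + 1) * (s * M) = j * (s * M) + s * M := by ring
    omega

theorem arith {t n s : ℕ} (ht : 1 ≤ t) (hn : 1 ≤ n) (hs : s = (t - 1) * n + 1) :
    n * (s * (n * (2 * (s.choose t * (s - 1)) + 1))) ≤ (2 * t * n ^ 3) ^ (2 * t - 1) := by
  rcases ht.eq_or_lt with rfl | ht2
  · simp at hs
    subst hs
    simp
    nlinarith [Nat.pow_le_pow_right hn (show 2 ≤ 3 by omega)]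
  have hs1 : 1 ≤ s := by omega
  have hst : s ≤ t * n := by
    obtain ⟨r, rfl⟩ : ∃ r, t = r + 1 := ⟨t - 1, by omega⟩
    rw [hs, Nat.add_sub_cancel, Nat.add_mul]; omega
  have hch : s.choose t ≤ s ^ t := Nat.choose_le_pow s t
  have h1 : 2 * (s.choose t * (s - 1)) + 1 ≤ 2 * s ^ (t + 1) := by
    have h2 : s.choose t * (s - 1) ≤ s ^ t * (s - 1) := Nat.mul_le_mul_right _ hch
    have h3 : s ^ t * (s - 1) + s ^ t = s ^ (t + 1) := by
      rw [pow_succ]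
      obtain ⟨r, rfl⟩ : ∃ r, s = r + 1 := ⟨s - 1, by omega⟩
      simp; ring
    have h4 : 1 ≤ s ^ t := Nat.one_le_pow _ _ hs1
    omega
  have h5 : n * (s * (n * (2 * (s.choose t * (s - 1)) + 1))) ≤ 2 * n ^ 2 * (t * n) ^ (t + 2) := by
    calc _ ≤ n * (s * (n * (2 * s ^ (t + 1)))) := by gcongr
      _ = 2 * n ^ 2 * s ^ (t + 2) := by ring
      _ ≤ _ := by gcongr
  refine h5.trans ?_
  rcases (show 2 ≤ t from ht2).eq_or_lt with rfl | ht3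
  · have : n ^ 6 ≤ n ^ 9 := Nat.pow_le_pow_right hn (by omega)
    calc _ = 32 * n ^ 6 := by ring
      _ ≤ 64 * n ^ 9 := by omega
      _ = _ := by norm_num; ring
  · have h0 : 0 < 2 * t * n ^ 3 := by positivity
    calc 2 * n ^ 2 * (t * n) ^ (t + 2) ≤ (2 * n ^ 2) ^ (t + 2) * (t * n) ^ (t + 2) := by
          gcongr
          exact Nat.le_self_pow (by omega) _
      _ = (2 * t * n ^ 3) ^ (t + 2) := by rw [← mul_pow]; ring
      _ ≤ _ := Nat.pow_le_pow_right h0 (by omega)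

end Blow

/-- `R_<(P_n[t], K_n) ≤ (2 t n³)^(2t−1)`. -/
theorem stmt18 (t n : ℕ) (ht : 1 ≤ t) (hn : 1 ≤ n) :
    ordRamseyBlowupClique n t n ≤ (2 * t * n ^ 3) ^ (2 * t - 1) := by
  apply Nat.sInf_le
  intro χ
  by_contra! hcon
  obtain ⟨hred, hblue⟩ := hcon
  obtain ⟨k, rfl⟩ : ∃ k, n = k + 1 := ⟨n - 1, by omega⟩
  obtain ⟨s, hs⟩ : ∃ s, s = (t - 1) * (k + 1) + 1 := ⟨_, rfl⟩
  have hts : t ≤ s := by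
    have := Nat.le_mul_of_pos_right (t - 1) (show 0 < k + 1 by omega)
    omega
  have h1 := Blow.level ht hs hblue k Finset.univ (by
    intro U _ hUc hall
    obtain ⟨A, hA, hAc⟩ := Finset.exists_subset_card_eq (show t ≤ U.card by omega)
    exact hred (Blow.redBlowup_of_pathEnd ht (hall A hA hAc)))
  rw [Finset.card_univ, Fintype.card_fin] at h1
  have h2 := Blow.arith ht hn hs
  have h3 : s ≤ s * ((k + 1) * (2 * (s.choose t * (s - 1)) + 1)) :=
    Nat.le_mul_of_pos_right _ (by positivity)
  generalize s * ((k + 1) * (2 * (s.choose t * (s - 1)) + 1)) = M at *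
  have h6 : (k + 1) * M = k * M + M := by ring
  omega
end
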